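/- arXiv:1906.10722 — 5 statements merged into one kernel-verified Lean document; each statement's English description precedes it below -/
import Mathlib

section
/- Let F : ℝ² → ℝ be a Schwartz function and let α = (α₁,α₂) ∈ [0,1)². Then for every N ∈ ℕ, as t → 0⁺, Σ_{n∈ℕ₀²} F((n₁+α₁)t, (n₂+α₂)t) = (1/t²)∫₀^∞∫₀^∞ F(x₁,x₂) dx₁dx₂ − Σ_{m=0}^{N} [B_{m+1}(α₂)/(m+1)!] (∫₀^∞ ∂₂^m F(x,0) dx) t^{m−1} − Σ_{m=0}^{N} [B_{m+1}(α₁)/(m+1)!] (∫₀^∞ ∂₁^m F(0,x) dx) t^{m−1} + Σ_{m₁=0}^{N} Σ_{m₂=0}^{N} [B_{m₁+1}(α₁)B_{m₂+1}(α₂)/((m₁+1)!(m₂+1)!)] ∂₁^{m₁}∂₂^{m₂}F(0,0) t^{m₁+m₂} + O(t^N). -/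
open MeasureTheory Filter Topology Asymptotics Polynomial

/-!
Subtract from `f` on `[0, 1]` its mean and the first `M` Bernoulli boundary terms. The remainder has
mean zero, and its derivative is the remainder of order `M - 1` of the derivative of `f`, so it is
bounded by a constant times the supremum of the `M`-th derivative. Summing over the unit translates
telescopes the boundary terms and gives the one-dimensional Euler–Maclaurin formula; for
`f x = g (x * t)` the error is `O(t ^ M)`, with a constant proportional to the size of `g` in a
weighted `C^(M + 1)` norm.

In two dimensions this is applied first to the slices `F (x, ·)`. The resulting main term is, as a
function of `x`, of size `O(t⁻¹)` in the weighted norm, so the formula applies to it in turn, with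
the uniformity in `g` controlling both errors. Either step loses one power of `t`: the sum of the
slice errors has effectively `O(t⁻¹)` terms, and the second function has norm `O(t⁻¹)`. This is why
`N + 1` boundary terms yield an error `O(t ^ N)`.
-/

/-- The Bernoulli polynomial divided by its factorial, `B_m(a) / m!`. With this normalization each
one is an antiderivative of the previous one. -/
noncomputable def bernoulliCoeff (m : ℕ) (a : ℝ) : ℝ :=
  Polynomial.aeval a (Polynomial.bernoulli m) / (Nat.factorial m : ℝ)

lemma bernoulliCoeff_eq_bernoulliFun_div (m : ℕ) :
    bernoulliCoeff m = fun a ↦ bernoulliFun m a / (Nat.factorial m : ℝ) := by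
  ext a
  simp [bernoulliCoeff, bernoulliFun, aeval_def, eval_map]

lemma bernoulliCoeff_zero (a : ℝ) : bernoulliCoeff 0 a = 1 := by
  simp [bernoulliCoeff]

lemma hasDerivAt_bernoulliCoeff_succ (m : ℕ) (a : ℝ) :
    HasDerivAt (bernoulliCoeff (m + 1)) (bernoulliCoeff m a) a := by
  simp only [bernoulliCoeff_eq_bernoulliFun_div]
  convert! (hasDerivAt_bernoulliFun (m + 1) a).div_const ((m + 1).factorial : ℝ) using 1
  rw [Nat.factorial_succ, Nat.cast_mul, Nat.add_sub_cancel, mul_div_mul_left _ _ (by positivity)]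

lemma continuous_bernoulliCoeff (m : ℕ) : Continuous (bernoulliCoeff m) := by
  rw [bernoulliCoeff_eq_bernoulliFun_div]
  exact (continuous_bernoulliFun m).div_const _

lemma integral_bernoulliCoeff_succ (m : ℕ) : ∫ a in (0 : ℝ)..1, bernoulliCoeff (m + 1) a = 0 := by
  rw [bernoulliCoeff_eq_bernoulliFun_div, intervalIntegral.integral_div,
    integral_bernoulliFun_eq_zero m.succ_ne_zero, zero_div]

section Remainder

variable {E : Type*} [NormedAddCommGroup E] [NormedSpace ℝ E]

/-- The error of order `M` in the Euler–Maclaurin expansion of `f a` over the interval `[0, 1]`. -/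
noncomputable def bernoulliRemainder (M : ℕ) (f : ℝ → E) (a : ℝ) : E :=
  f a - (∫ x in (0 : ℝ)..1, f x) -
    ∑ m ∈ Finset.range M,
      bernoulliCoeff (m + 1) a • (iteratedDeriv m f 1 - iteratedDeriv m f 0)

/-- The approximation to `∑ n, f (n + a)` given by the one-dimensional Euler–Maclaurin formula with
`M` boundary terms. -/
noncomputable def eulerMaclaurinMain (M : ℕ) (a : ℝ) (f : ℝ → E) : E :=
  (∫ x in Set.Ioi (0 : ℝ), f x) -
    ∑ m ∈ Finset.range M, bernoulliCoeff (m + 1) a • iteratedDeriv m f 0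

lemma sum_bernoulliRemainder_comp_natCast_add {f : ℝ → E} (hf : Continuous f) (M : ℕ) (a : ℝ)
    (K : ℕ) :
    ∑ n ∈ Finset.range K, bernoulliRemainder M (fun x ↦ f (n + x)) a =
      ∑ n ∈ Finset.range K, f (n + a) - (∫ x in (0 : ℝ)..K, f x) -
        ∑ m ∈ Finset.range M,
          bernoulliCoeff (m + 1) a • (iteratedDeriv m f K - iteratedDeriv m f 0) := by
  have integrals : ∑ n ∈ Finset.range K, ∫ x in (0 : ℝ)..1, f (n + x) = ∫ x in (0 : ℝ)..K, f x := by
    simpa using intervalIntegral.sum_integral_adjacent_intervals (a := fun n : ℕ ↦ (n : ℝ))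
      fun n _ ↦ hf.intervalIntegrable _ _
  have differences (m : ℕ) :
      ∑ n ∈ Finset.range K, (iteratedDeriv m f (n + 1) - iteratedDeriv m f n) =
        iteratedDeriv m f K - iteratedDeriv m f 0 := by
    simpa using Finset.sum_range_sub (fun n : ℕ ↦ iteratedDeriv m f n) K
  simp only [bernoulliRemainder, Finset.sum_sub_distrib, iteratedDeriv_comp_const_add, add_zero,
    integrals]
  rw [Finset.sum_comm]
  simp only [← Finset.smul_sum, differences]

variable [CompleteSpace E]

lemma integral_bernoulliRemainder {f : ℝ → E} (hf : Continuous f) (M : ℕ) :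
    ∫ a in (0 : ℝ)..1, bernoulliRemainder M f a = 0 := by
  have smul_integrable (m : ℕ) (v : E) :
      IntervalIntegrable (fun a ↦ bernoulliCoeff (m + 1) a • v) volume 0 1 :=
    ((continuous_bernoulliCoeff _).smul continuous_const).intervalIntegrable _ _
  have f_integrable : IntervalIntegrable f volume 0 1 := hf.intervalIntegrable _ _
  simp only [bernoulliRemainder]
  rw [intervalIntegral.integral_sub (f_integrable.sub intervalIntegrable_const)
      (by simpa only [Finset.sum_fn] using IntervalIntegrable.sum _ fun m _ ↦ smul_integrable m _),
    intervalIntegral.integral_sub f_integrable intervalIntegrable_const,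
    intervalIntegral.integral_finsetSum fun m _ ↦ smul_integrable m _]
  simp [intervalIntegral.integral_smul_const, integral_bernoulliCoeff_succ]

lemma hasDerivAt_bernoulliRemainder_succ {M : ℕ} {f : ℝ → E} (hf : ContDiff ℝ (M + 1) f) (a : ℝ) :
    HasDerivAt (bernoulliRemainder (M + 1) f) (bernoulliRemainder M (deriv f) a) a := by
  obtain ⟨f_diff, -, deriv_contDiff⟩ := contDiff_succ_iff_deriv.1 hf
  have integral_deriv : ∫ x in (0 : ℝ)..1, deriv f x = f 1 - f 0 :=
    intervalIntegral.integral_deriv_eq_sub (fun x _ ↦ f_diff x)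
      (deriv_contDiff.continuous.intervalIntegrable _ _)
  convert! ((f_diff a).hasDerivAt.sub_const (∫ x in (0 : ℝ)..1, f x)).sub
    (HasDerivAt.fun_sum fun m (_ : m ∈ Finset.range (M + 1)) ↦
      (hasDerivAt_bernoulliCoeff_succ m a).smul_const
        (iteratedDeriv m f 1 - iteratedDeriv m f 0)) using 1
  rw [Finset.sum_range_succ']
  simp only [bernoulliRemainder, iteratedDeriv_succ', iteratedDeriv_zero, integral_deriv,
    bernoulliCoeff_zero, one_smul]
  abel

lemma norm_le_of_integral_eq_zero_of_norm_deriv_le {f f' : ℝ → E} {l u C : ℝ} (hl : l ≤ 0)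
    (hu : 1 ≤ u) (hf : ∀ x, HasDerivAt f (f' x) x) (hint : ∫ x in (0 : ℝ)..1, f x = 0)
    (hC : ∀ x ∈ Set.Icc l u, ‖f' x‖ ≤ C) {a : ℝ} (ha : a ∈ Set.Icc l u) :
    ‖f a‖ ≤ (u - l) * C := by
  have f_cont : Continuous f := continuous_iff_continuousAt.2 fun x ↦ (hf x).continuousAt
  have eq_average : f a = ∫ b in (0 : ℝ)..1, (f a - f b) := by
    rw [intervalIntegral.integral_sub intervalIntegrable_const (f_cont.intervalIntegrable _ _),
      hint]
    simp
  have increment_le : ∀ b ∈ Set.uIoc (0 : ℝ) 1, ‖f a - f b‖ ≤ (u - l) * C := by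
    intro b hb
    rw [Set.uIoc_of_le zero_le_one] at hb
    have hb' : b ∈ Set.Icc l u := ⟨hl.trans hb.1.le, hb.2.trans hu⟩
    calc ‖f a - f b‖ ≤ C * ‖a - b‖ :=
          (convex_Icc l u).norm_image_sub_le_of_norm_hasDerivWithin_le
            (fun x _ ↦ (hf x).hasDerivWithinAt) hC hb' ha
      _ ≤ C * (u - l) := by
          gcongr
          · exact (norm_nonneg _).trans (hC a ha)
          · exact Real.dist_le_of_mem_Icc ha hb'
      _ = (u - l) * C := mul_comm _ _
  rw [eq_average]
  simpa using intervalIntegral.norm_integral_le_of_norm_le_const increment_le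

/-- Differentiating the remainder of order `M + 1` gives the remainder of order `M` of `deriv f`,
and every remainder has mean zero on `[0, 1]`, so each order costs one factor `u - l`. -/
lemma norm_bernoulliRemainder_le {M : ℕ} {f : ℝ → E} {l u C : ℝ} (hl : l ≤ 0) (hu : 1 ≤ u)
    (hf : ContDiff ℝ M f) (hC : ∀ x ∈ Set.Icc l u, ‖iteratedDeriv M f x‖ ≤ C) {a : ℝ}
    (ha : a ∈ Set.Icc l u) : ‖bernoulliRemainder M f a‖ ≤ 2 * (u - l) ^ M * C := by
  induction M generalizing f a with
  | zero =>
    have integral_le : ‖∫ x in (0 : ℝ)..1, f x‖ ≤ C := by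
      have f_le : ∀ x ∈ Set.uIoc (0 : ℝ) 1, ‖f x‖ ≤ C := fun x hx ↦ by
        rw [Set.uIoc_of_le zero_le_one] at hx
        exact hC x ⟨hl.trans hx.1.le, hx.2.trans hu⟩
      simpa using intervalIntegral.norm_integral_le_of_norm_le_const f_le
    calc ‖bernoulliRemainder 0 f a‖ = ‖f a - ∫ x in (0 : ℝ)..1, f x‖ := by
          simp [bernoulliRemainder]
      _ ≤ C + C := norm_sub_le_of_le (hC a ha) integral_le
      _ = 2 * (u - l) ^ 0 * C := by ring
  | succ M ih =>
    push_cast at hf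
    calc ‖bernoulliRemainder (M + 1) f a‖ ≤ (u - l) * (2 * (u - l) ^ M * C) :=
          norm_le_of_integral_eq_zero_of_norm_deriv_le hl hu (hasDerivAt_bernoulliRemainder_succ hf)
            (integral_bernoulliRemainder hf.continuous _)
            (fun x hx ↦ ih (contDiff_succ_iff_deriv.1 hf).2.2
              (by simpa only [iteratedDeriv_succ'] using hC) hx) ha
      _ = 2 * (u - l) ^ (M + 1) * C := by ring

theorem norm_tsum_sub_eulerMaclaurinMain_le {M : ℕ} {f : ℝ → E} {l u a : ℝ} {β : ℕ → ℝ}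
    (hl : l ≤ 0) (hu : 1 ≤ u) (ha : a ∈ Set.Icc l u) (hf : ContDiff ℝ M f)
    (hint : IntegrableOn f (Set.Ioi 0)) (hsum : Summable fun n : ℕ ↦ f (n + a))
    (hlim : ∀ m < M, Tendsto (iteratedDeriv m f) atTop (𝓝 0)) (hβ : Summable β)
    (hbound : ∀ n : ℕ, ∀ x ∈ Set.Icc l u, ‖iteratedDeriv M f (n + x)‖ ≤ β n) :
    ‖∑' n : ℕ, f (n + a) - eulerMaclaurinMain M a f‖ ≤ 2 * (u - l) ^ M * ∑' n, β n := by
  have remainder_le (n : ℕ) :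
      ‖bernoulliRemainder M (fun x ↦ f (n + x)) a‖ ≤ 2 * (u - l) ^ M * β n :=
    norm_bernoulliRemainder_le hl hu (by fun_prop)
      (by simpa only [iteratedDeriv_comp_const_add] using hbound n) ha
  have partial_sums_tendsto : Tendsto
      (fun K ↦ ∑ n ∈ Finset.range K, bernoulliRemainder M (fun x ↦ f (n + x)) a) atTop
      (𝓝 (∑' n : ℕ, f (n + a) - eulerMaclaurinMain M a f)) := by
    have integral_tendsto := intervalIntegral_tendsto_integral_Ioi 0 hint
      (tendsto_natCast_atTop_atTop (R := ℝ))
    have boundary_tendsto := tendsto_finsetSum (Finset.range M) fun m hm ↦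
      (((hlim m (Finset.mem_range.1 hm)).comp (tendsto_natCast_atTop_atTop (R := ℝ))).sub_const
        (iteratedDeriv m f 0)).const_smul (bernoulliCoeff (m + 1) a)
    simp only [sum_bernoulliRemainder_comp_natCast_add hf.continuous]
    convert! (hsum.hasSum.tendsto_sum_nat.sub integral_tendsto).sub boundary_tendsto using 2
    simp only [eulerMaclaurinMain, zero_sub, smul_neg, Finset.sum_neg_distrib]
    abel
  refine le_of_tendsto partial_sums_tendsto.norm (Eventually.of_forall fun K ↦ ?_)
  have majorant_summable : Summable fun n ↦ 2 * (u - l) ^ M * β n := hβ.mul_left _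
  rw [← tsum_mul_left]
  exact (norm_sum_le_of_le _ fun n _ ↦ remainder_le n).trans
    (majorant_summable.sum_le_tsum _ fun n _ ↦ (norm_nonneg _).trans (remainder_le n))

end Remainder

section Decay

/-- The weight `(1 + x²)⁻¹`, an integrable majorant for rapidly decaying functions that is monotone
on the half-line, so that its lattice sums compare with its integral. -/
noncomputable def quadraticWeight (x : ℝ) : ℝ := (1 + x ^ 2)⁻¹

lemma quadraticWeight_pos (x : ℝ) : 0 < quadraticWeight x := by
  unfold quadraticWeight
  positivity

lemma quadraticWeight_le_one (x : ℝ) : quadraticWeight x ≤ 1 :=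
  inv_le_one_of_one_le₀ (le_add_of_nonneg_right (sq_nonneg x))

lemma quadraticWeight_add_le (x y : ℝ) :
    quadraticWeight (x + y) ≤ 2 * (1 + y ^ 2) * quadraticWeight x := by
  unfold quadraticWeight
  rw [← div_eq_mul_inv, inv_le_comm₀ (by positivity) (by positivity), inv_div,
    div_le_iff₀ (by positivity)]
  nlinarith [sq_nonneg (x + 2 * y), mul_nonneg (sq_nonneg (x + y)) (sq_nonneg y)]

lemma tendsto_quadraticWeight_atTop : Tendsto quadraticWeight atTop (𝓝 0) :=
  (tendsto_atTop_add_const_left _ 1 (tendsto_pow_atTop two_ne_zero)).inv_tendsto_atTop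

lemma integrable_quadraticWeight : Integrable quadraticWeight := integrable_inv_one_add_sq

lemma antitoneOn_quadraticWeight_mul {t : ℝ} (ht : 0 < t) :
    AntitoneOn (fun x ↦ quadraticWeight (x * t)) (Set.Ici 0) := by
  intro x hx y _ hxy
  have : 0 ≤ x := hx
  simp only [quadraticWeight]
  gcongr

lemma summable_quadraticWeight_natCast_mul {t : ℝ} (ht : 0 < t) :
    Summable fun n : ℕ ↦ quadraticWeight (n * t) :=
  (antitoneOn_quadraticWeight_mul ht).summable_of_integrableOn_Ioi_zero
    (integrable_quadraticWeight.comp_mul_right' ht.ne').integrableOn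
    fun _ _ ↦ (quadraticWeight_pos _).le

lemma tsum_quadraticWeight_natCast_mul_le {t : ℝ} (ht : 0 < t) (ht1 : t ≤ 1) :
    ∑' n : ℕ, quadraticWeight (n * t) ≤ 3 * t⁻¹ := by
  have integral_eq : ∫ x in Set.Ioi (0 : ℝ), quadraticWeight (x * t) = t⁻¹ * (Real.pi / 2) := by
    rw [integral_comp_mul_right_Ioi quadraticWeight 0 ht]
    simp [quadraticWeight]
  have one_le_inv : 1 ≤ t⁻¹ := (one_le_inv₀ ht).2 ht1
  calc ∑' n : ℕ, quadraticWeight (n * t)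
      ≤ quadraticWeight (0 * t) + ∫ x in Set.Ioi (0 : ℝ), quadraticWeight (x * t) :=
        (antitoneOn_quadraticWeight_mul ht).tsum_le_integral
          (integrable_quadraticWeight.comp_mul_right' ht.ne').integrableOn
          fun _ _ ↦ (quadraticWeight_pos _).le
    _ ≤ 1 + t⁻¹ * (Real.pi / 2) := add_le_add (quadraticWeight_le_one _) integral_eq.le
    _ ≤ 3 * t⁻¹ := by nlinarith [Real.pi_le_four]

lemma quadraticWeight_natCast_add_mul_le {A x t : ℝ} (hx : |x| ≤ A) (ht : 0 < t) (ht1 : t ≤ 1)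
    (n : ℕ) :
    quadraticWeight ((n + x) * t) ≤ 2 * (1 + A ^ 2) * quadraticWeight (n * t) := by
  have : |x * t| ≤ A := by
    rw [abs_mul, abs_of_pos ht]
    exact (mul_le_of_le_one_right (abs_nonneg x) ht1).trans hx
  rw [add_mul]
  refine (quadraticWeight_add_le _ _).trans ?_
  gcongr 2 * (1 + ?_) * _
  · exact (quadraticWeight_pos _).le
  · exact sq_le_sq.2 (this.trans (le_abs_self A))

lemma summable_quadraticWeight_natCast_add_mul {t : ℝ} (ht : 0 < t) (a : ℝ) :
    Summable fun n : ℕ ↦ quadraticWeight ((n + a) * t) := by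
  have majorant_summable :=
    (summable_quadraticWeight_natCast_mul ht).mul_left (2 * (1 + (a * t) ^ 2))
  refine majorant_summable.of_nonneg_of_le (fun n ↦ (quadraticWeight_pos _).le) fun n ↦ ?_
  rw [add_mul]
  exact quadraticWeight_add_le _ _

lemma tsum_quadraticWeight_natCast_add_mul_le {A a t : ℝ} (ha : |a| ≤ A) (ht : 0 < t)
    (ht1 : t ≤ 1) :
    ∑' n : ℕ, quadraticWeight ((n + a) * t) ≤ 6 * (1 + A ^ 2) * t⁻¹ :=
  calc ∑' n : ℕ, quadraticWeight ((n + a) * t)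
      ≤ ∑' n : ℕ, 2 * (1 + A ^ 2) * quadraticWeight (n * t) :=
        (summable_quadraticWeight_natCast_add_mul ht a).tsum_le_tsum
          (quadraticWeight_natCast_add_mul_le ha ht ht1)
          ((summable_quadraticWeight_natCast_mul ht).mul_left _)
    _ = 2 * (1 + A ^ 2) * ∑' n : ℕ, quadraticWeight (n * t) := tsum_mul_left
    _ ≤ 2 * (1 + A ^ 2) * (3 * t⁻¹) := by
        gcongr
        exact tsum_quadraticWeight_natCast_mul_le ht ht1
    _ = 6 * (1 + A ^ 2) * t⁻¹ := by ring

variable {E : Type*} [NormedAddCommGroup E] [NormedSpace ℝ E]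

/-- `g` belongs to the ball of radius `C` in the space of `C^r` functions whose derivatives of
order at most `r` decay like `(1 + x²)⁻¹`. Tracking `C` makes estimates for the slices of a function
of two variables uniform. -/
structure QuadraticDecay (r : ℕ) (C : ℝ) (g : ℝ → E) : Prop where
  contDiff : ContDiff ℝ r g
  norm_iteratedDeriv_le : ∀ k ≤ r, ∀ x, ‖iteratedDeriv k g x‖ ≤ C * quadraticWeight x

lemma iteratedDeriv_comp_mul_right {g : ℝ → E} {k : ℕ} (hg : ContDiff ℝ k g) (t x : ℝ) :
    iteratedDeriv k (fun x ↦ g (x * t)) x = t ^ k • iteratedDeriv k g (x * t) := by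
  simpa only [mul_comm t] using congrFun (iteratedDeriv_comp_const_smul hg t) x

namespace QuadraticDecay

variable {r : ℕ} {C t : ℝ} {g : ℝ → E}

lemma norm_le (hg : QuadraticDecay r C g) (x : ℝ) : ‖g x‖ ≤ C * quadraticWeight x := by
  simpa using hg.norm_iteratedDeriv_le 0 r.zero_le x

lemma nonneg (hg : QuadraticDecay r C g) : 0 ≤ C :=
  nonneg_of_mul_nonneg_left ((norm_nonneg _).trans (hg.norm_le 0)) (quadraticWeight_pos 0)

lemma integrable (hg : QuadraticDecay r C g) : Integrable g :=
  (integrable_quadraticWeight.const_mul C).mono' hg.contDiff.continuous.aestronglyMeasurable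
    (Eventually.of_forall hg.norm_le)

lemma tendsto_iteratedDeriv_atTop (hg : QuadraticDecay r C g) {k : ℕ} (hk : k ≤ r) :
    Tendsto (iteratedDeriv k g) atTop (𝓝 0) :=
  squeeze_zero_norm (hg.norm_iteratedDeriv_le k hk)
    (by simpa using tendsto_quadraticWeight_atTop.const_mul C)

lemma of_le {s : ℕ} (hg : QuadraticDecay r C g) (hs : s ≤ r) : QuadraticDecay s C g :=
  ⟨hg.contDiff.of_le (mod_cast hs), fun k hk ↦ hg.norm_iteratedDeriv_le k (hk.trans hs)⟩

lemma tendsto_iteratedDeriv_comp_mul_atTop (hg : QuadraticDecay r C g) (ht : 0 < t) {k : ℕ}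
    (hk : k ≤ r) : Tendsto (iteratedDeriv k fun x ↦ g (x * t)) atTop (𝓝 0) := by
  have g_tendsto := (hg.tendsto_iteratedDeriv_atTop hk).comp (tendsto_id.atTop_mul_const ht)
  rw [← smul_zero (t ^ k)]
  exact (g_tendsto.const_smul _).congr fun x ↦
    (iteratedDeriv_comp_mul_right (hg.of_le hk).contDiff t x).symm

lemma norm_iteratedDeriv_comp_mul_le (hg : QuadraticDecay r C g) {A x : ℝ} (hx : |x| ≤ A)
    (ht : 0 < t) (ht1 : t ≤ 1) (n : ℕ) :
    ‖iteratedDeriv r (fun x ↦ g (x * t)) (n + x)‖ ≤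
      t ^ r * C * (2 * (1 + A ^ 2)) * quadraticWeight (n * t) := by
  have C_nonneg := hg.nonneg
  rw [iteratedDeriv_comp_mul_right hg.contDiff, norm_smul, Real.norm_of_nonneg (by positivity)]
  calc t ^ r * ‖iteratedDeriv r g ((n + x) * t)‖
      ≤ t ^ r * (C * (2 * (1 + A ^ 2) * quadraticWeight (n * t))) := by
        gcongr
        refine (hg.norm_iteratedDeriv_le r le_rfl _).trans ?_
        gcongr
        exact quadraticWeight_natCast_add_mul_le hx ht ht1 n
    _ = t ^ r * C * (2 * (1 + A ^ 2)) * quadraticWeight (n * t) := by ring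

lemma sub {C' : ℝ} {g' : ℝ → E} (hg : QuadraticDecay r C g) (hg' : QuadraticDecay r C' g') :
    QuadraticDecay r (C + C') (fun x ↦ g x - g' x) where
  contDiff := hg.contDiff.sub hg'.contDiff
  norm_iteratedDeriv_le k hk x := by
    rw [iteratedDeriv_fun_sub (hg.of_le hk).contDiff.contDiffAt (hg'.of_le hk).contDiff.contDiffAt,
      add_mul]
    exact norm_sub_le_of_le (hg.norm_iteratedDeriv_le k hk x) (hg'.norm_iteratedDeriv_le k hk x)

lemma const_smul (hg : QuadraticDecay r C g) (c : ℝ) :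
    QuadraticDecay r (|c| * C) (fun x ↦ c • g x) where
  contDiff := hg.contDiff.const_smul c
  norm_iteratedDeriv_le k hk x := by
    rw [iteratedDeriv_fun_const_smul_field, norm_smul, Real.norm_eq_abs, mul_assoc]
    gcongr
    exact hg.norm_iteratedDeriv_le k hk x

lemma sum {ι : Type*} {s : Finset ι} {C : ι → ℝ} {g : ι → ℝ → E}
    (hg : ∀ i ∈ s, QuadraticDecay r (C i) (g i)) :
    QuadraticDecay r (∑ i ∈ s, C i) (fun x ↦ ∑ i ∈ s, g i x) where
  contDiff := ContDiff.sum fun i hi ↦ (hg i hi).contDiff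
  norm_iteratedDeriv_le k hk x := by
    rw [iteratedDeriv_fun_sum fun i hi ↦ ((hg i hi).of_le hk).contDiff.contDiffAt, Finset.sum_mul]
    exact norm_sum_le_of_le s fun i hi ↦ (hg i hi).norm_iteratedDeriv_le k hk x

lemma mono {C' : ℝ} (hg : QuadraticDecay r C g) (hC : C ≤ C') : QuadraticDecay r C' g :=
  ⟨hg.contDiff, fun k hk x ↦ (hg.norm_iteratedDeriv_le k hk x).trans
    (mul_le_mul_of_nonneg_right hC (quadraticWeight_pos x).le)⟩

variable [CompleteSpace E]

lemma summable_natCast_add_mul (hg : QuadraticDecay r C g) (ht : 0 < t) (a : ℝ) :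
    Summable fun n : ℕ ↦ g ((n + a) * t) :=
  ((summable_quadraticWeight_natCast_add_mul ht a).mul_left C).of_norm_bounded
    fun _ ↦ hg.norm_le _

lemma norm_tsum_sub_eulerMaclaurinMain_succ_le {M : ℕ} (hg : QuadraticDecay (M + 1) C g)
    {A a : ℝ} (hA : 1 ≤ A) (ha : |a| ≤ A) (ht : 0 < t) (ht1 : t ≤ 1) :
    ‖∑' n : ℕ, g ((n + a) * t) - eulerMaclaurinMain (M + 1) a (fun x ↦ g (x * t))‖ ≤
      12 * (2 * A) ^ (M + 1) * (1 + A ^ 2) * (C * t ^ M) := by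
  have C_nonneg := hg.nonneg
  have weight_summable := summable_quadraticWeight_natCast_mul ht
  calc ‖∑' n : ℕ, g ((n + a) * t) - eulerMaclaurinMain (M + 1) a (fun x ↦ g (x * t))‖
      ≤ 2 * (A - -A) ^ (M + 1) *
          ∑' n : ℕ, t ^ (M + 1) * C * (2 * (1 + A ^ 2)) * quadraticWeight (n * t) :=
        norm_tsum_sub_eulerMaclaurinMain_le (by linarith) hA (abs_le.1 ha)
          (hg.contDiff.comp (contDiff_id.mul contDiff_const))
          (hg.integrable.comp_mul_right' ht.ne').integrableOn (hg.summable_natCast_add_mul ht a)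
          (fun m hm ↦ hg.tendsto_iteratedDeriv_comp_mul_atTop ht hm.le)
          (weight_summable.mul_left _)
          fun n x hx ↦ hg.norm_iteratedDeriv_comp_mul_le (abs_le.2 hx) ht ht1 n
    _ ≤ 2 * (A - -A) ^ (M + 1) * (t ^ (M + 1) * C * (2 * (1 + A ^ 2)) * (3 * t⁻¹)) := by
        rw [tsum_mul_left, sub_neg_eq_add]
        gcongr
        exact tsum_quadraticWeight_natCast_mul_le ht ht1
    _ = 12 * (2 * A) ^ (M + 1) * (1 + A ^ 2) * (C * t ^ M) := by
        field_simp
        ring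

end QuadraticDecay

/-- The remainder with one boundary term more is of the right order, and that extra term is itself
`O(t ^ M)`; truncating here loses no power of `t`. -/
theorem exists_norm_tsum_sub_eulerMaclaurinMain_le [CompleteSpace E] (M : ℕ) (a : ℝ) :
    ∃ K, 0 ≤ K ∧ ∀ (C : ℝ) (g : ℝ → E), QuadraticDecay (M + 1) C g → ∀ t, 0 < t → t ≤ 1 →
      ‖∑' n : ℕ, g ((n + a) * t) - eulerMaclaurinMain M a (fun x ↦ g (x * t))‖ ≤
        K * (C * t ^ M) := by
  set A := max 1 |a|
  refine ⟨12 * (2 * A) ^ (M + 1) * (1 + A ^ 2) + |bernoulliCoeff (M + 1) a|,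
    by positivity, fun C g hg t ht ht1 ↦ ?_⟩
  have last_term_le : ‖iteratedDeriv M (fun x ↦ g (x * t)) 0‖ ≤ C * t ^ M := by
    rw [iteratedDeriv_comp_mul_right (hg.of_le M.le_succ).contDiff, norm_smul,
      Real.norm_of_nonneg (by positivity), mul_comm]
    gcongr
    exact (hg.norm_iteratedDeriv_le M M.le_succ _).trans
      (mul_le_of_le_one_right hg.nonneg (quadraticWeight_le_one _))
  have split : ∑' n : ℕ, g ((n + a) * t) - eulerMaclaurinMain M a (fun x ↦ g (x * t)) =
      (∑' n : ℕ, g ((n + a) * t) - eulerMaclaurinMain (M + 1) a (fun x ↦ g (x * t))) -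
        bernoulliCoeff (M + 1) a • iteratedDeriv M (fun x ↦ g (x * t)) 0 := by
    rw [eulerMaclaurinMain, eulerMaclaurinMain, Finset.sum_range_succ]
    abel
  rw [split, add_mul]
  refine norm_sub_le_of_le (hg.norm_tsum_sub_eulerMaclaurinMain_succ_le (le_max_left _ _)
    (le_max_right _ _) ht ht1) ?_
  rw [norm_smul, Real.norm_eq_abs]
  gcongr

end Decay

section Schwartz

open scoped LineDeriv SchwartzMap

variable {E : Type*} [NormedAddCommGroup E] [NormedSpace ℝ E]

lemma iteratedDeriv_schwartz_comp {V : Type*} [NormedAddCommGroup V] [NormedSpace ℝ V]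
    (F : 𝓢(V, E)) {c : ℝ → V} {v : V} (hc : ∀ s, HasDerivAt c v s) (k : ℕ) :
    iteratedDeriv k (fun s ↦ F (c s)) = fun s ↦ (∂^{fun _ : Fin k ↦ v} F) (c s) := by
  induction k with
  | zero => simp
  | succ k ih =>
    rw [iteratedDeriv_succ, ih]
    ext s
    exact (((∂^{fun _ : Fin k ↦ v} F).hasFDerivAt _).comp_hasDerivAt s (hc s)).deriv

lemma hasDerivAt_mk_right (x y : ℝ) : HasDerivAt (fun y ↦ (x, y)) ((0 : ℝ), (1 : ℝ)) y :=
  (hasDerivAt_const y x).prodMk (hasDerivAt_id' y)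

lemma hasDerivAt_mk_left (x y : ℝ) : HasDerivAt (fun x ↦ (x, y)) ((1 : ℝ), (0 : ℝ)) x :=
  (hasDerivAt_id' x).prodMk (hasDerivAt_const x y)

lemma one_add_sq_mul_one_add_sq_le (x y : ℝ) :
    (1 + x ^ 2) * (1 + y ^ 2) ≤ (1 + ‖(x, y)‖) ^ 4 := by
  have one_add_sq_le {z : ℝ} (hz : ‖z‖ ≤ ‖(x, y)‖) : 1 + z ^ 2 ≤ (1 + ‖(x, y)‖) ^ 2 := by
    rw [Real.norm_eq_abs] at hz
    nlinarith [sq_abs z, abs_nonneg z]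
  calc (1 + x ^ 2) * (1 + y ^ 2) ≤ (1 + ‖(x, y)‖) ^ 2 * (1 + ‖(x, y)‖) ^ 2 := by
        gcongr
        exacts [one_add_sq_le (norm_fst_le (x, y)), one_add_sq_le (norm_snd_le (x, y))]
    _ = (1 + ‖(x, y)‖) ^ 4 := by ring

lemma exists_norm_schwartz_le_quadraticWeight (F : 𝓢(ℝ × ℝ, E)) :
    ∃ C, 0 ≤ C ∧ ∀ x y, ‖F (x, y)‖ ≤ C * (quadraticWeight x * quadraticWeight y) := by
  have seminorm_bound (p : ℝ × ℝ) :=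
    SchwartzMap.one_add_le_sup_seminorm_apply (𝕜 := ℝ) (m := (4, 0)) le_rfl le_rfl F p
  simp only [norm_iteratedFDeriv_zero] at seminorm_bound
  refine ⟨_, le_trans (by positivity) (seminorm_bound 0), fun x y ↦ ?_⟩
  rw [quadraticWeight, quadraticWeight, ← mul_inv, ← div_eq_mul_inv, le_div_iff₀ (by positivity),
    mul_comm]
  exact (mul_le_mul_of_nonneg_right (one_add_sq_mul_one_add_sq_le x y) (norm_nonneg _)).trans
    (seminorm_bound (x, y))

lemma exists_norm_iteratedLineDerivOp_le_quadraticWeight (F : 𝓢(ℝ × ℝ, E)) (v : ℝ × ℝ) (r : ℕ) :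
    ∃ C, 0 ≤ C ∧ ∀ k ≤ r, ∀ x y,
      ‖(∂^{fun _ : Fin k ↦ v} F) (x, y)‖ ≤ C * (quadraticWeight x * quadraticWeight y) := by
  choose C C_nonneg hC using fun k : ℕ ↦
    exists_norm_schwartz_le_quadraticWeight (∂^{fun _ : Fin k ↦ v} F)
  refine ⟨∑ k ∈ Finset.range (r + 1), C k, Finset.sum_nonneg fun k _ ↦ C_nonneg k,
    fun k hk x y ↦ (hC k x y).trans ?_⟩
  have := quadraticWeight_pos x
  have := quadraticWeight_pos y
  gcongr
  exact Finset.single_le_sum (fun k _ ↦ C_nonneg k) (Finset.mem_range.2 (Nat.lt_succ_of_le hk))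

lemma exists_quadraticDecay_slice_right (F : 𝓢(ℝ × ℝ, E)) (r : ℕ) :
    ∃ C, 0 ≤ C ∧ ∀ x, QuadraticDecay r (C * quadraticWeight x) (fun y ↦ F (x, y)) := by
  obtain ⟨C, C_nonneg, hC⟩ := exists_norm_iteratedLineDerivOp_le_quadraticWeight F (0, 1) r
  refine ⟨C, C_nonneg, fun x ↦ ⟨(F.smooth r).comp (contDiff_prodMk_right x), fun k hk y ↦ ?_⟩⟩
  rw [iteratedDeriv_schwartz_comp F (hasDerivAt_mk_right x), mul_assoc]
  exact hC k hk x y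

lemma exists_quadraticDecay_slice_left (F : 𝓢(ℝ × ℝ, E)) (r : ℕ) (y : ℝ) :
    ∃ C, QuadraticDecay r C (fun x ↦ F (x, y)) := by
  obtain ⟨C, -, hC⟩ := exists_norm_iteratedLineDerivOp_le_quadraticWeight F (1, 0) r
  refine ⟨C * quadraticWeight y, (F.smooth r).comp (contDiff_prodMk_left y), fun k hk x ↦ ?_⟩
  rw [iteratedDeriv_schwartz_comp F (hasDerivAt_mk_left · y), mul_right_comm, mul_assoc]
  exact hC k hk x y

lemma exists_quadraticDecay_iteratedDeriv_slice (F : 𝓢(ℝ × ℝ, E)) (r m : ℕ) :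
    ∃ C, QuadraticDecay r C (fun x ↦ iteratedDeriv m (fun y ↦ F (x, y)) 0) := by
  simp only [iteratedDeriv_schwartz_comp F (hasDerivAt_mk_right _)]
  exact exists_quadraticDecay_slice_left _ r 0

lemma integrable_slice_right (F : 𝓢(ℝ × ℝ, E)) (x : ℝ) : Integrable fun y ↦ F (x, y) :=
  have ⟨_, _, hC⟩ := exists_quadraticDecay_slice_right F 0
  (hC x).integrable

lemma hasDerivAt_integral_slice (F : 𝓢(ℝ × ℝ, E)) (s : Set ℝ) (x : ℝ) :
    HasDerivAt (fun x ↦ ∫ y in s, F (x, y)) (∫ y in s, (∂_{((1 : ℝ), (0 : ℝ))} F) (x, y)) x := by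
  obtain ⟨C, C_nonneg, hC⟩ :=
    exists_norm_schwartz_le_quadraticWeight (∂_{((1 : ℝ), (0 : ℝ))} F)
  refine (hasDerivAt_integral_of_dominated_loc_of_deriv_le (μ := volume.restrict s)
    (bound := fun y ↦ C * quadraticWeight y) univ_mem
    (Eventually.of_forall fun x ↦ (integrable_slice_right F x).integrableOn.aestronglyMeasurable)
    (integrable_slice_right F x).integrableOn
    (integrable_slice_right _ x).integrableOn.aestronglyMeasurable
    (Eventually.of_forall fun y x _ ↦ (hC x y).trans ?_)
    (integrable_quadraticWeight.const_mul C).integrableOn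
    (Eventually.of_forall fun y x _ ↦
      (F.hasFDerivAt _).comp_hasDerivAt x (hasDerivAt_mk_left x y))).2
  gcongr
  exact mul_le_of_le_one_left (quadraticWeight_pos y).le (quadraticWeight_le_one x)

lemma iteratedDeriv_integral_slice (F : 𝓢(ℝ × ℝ, E)) (s : Set ℝ) (k : ℕ) :
    iteratedDeriv k (fun x ↦ ∫ y in s, F (x, y)) =
      fun x ↦ ∫ y in s, iteratedDeriv k (fun z ↦ F (z, y)) x := by
  simp only [iteratedDeriv_schwartz_comp F (hasDerivAt_mk_left · _)]
  induction k with
  | zero => simp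
  | succ k ih =>
    rw [iteratedDeriv_succ, ih]
    ext x
    exact (hasDerivAt_integral_slice _ s x).deriv

lemma exists_quadraticDecay_integral_slice (F : 𝓢(ℝ × ℝ, E)) (s : Set ℝ) (r : ℕ) :
    ∃ C, QuadraticDecay r C (fun x ↦ ∫ y in s, F (x, y)) := by
  obtain ⟨C, -, hC⟩ := exists_norm_iteratedLineDerivOp_le_quadraticWeight F (1, 0) r
  have iteratedDeriv_eq (k : ℕ) : iteratedDeriv k (fun x ↦ ∫ y in s, F (x, y)) =
      fun x ↦ ∫ y in s, (∂^{fun _ : Fin k ↦ ((1 : ℝ), (0 : ℝ))} F) (x, y) := by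
    simp only [iteratedDeriv_integral_slice, iteratedDeriv_schwartz_comp F (hasDerivAt_mk_left · _)]
  refine ⟨C * ∫ y in s, quadraticWeight y,
    contDiff_of_differentiable_iteratedDeriv (n := r) fun k _ x ↦ ?_, fun k hk x ↦ ?_⟩
  · rw [iteratedDeriv_eq]
    exact (hasDerivAt_integral_slice _ s x).differentiableAt
  · rw [iteratedDeriv_eq]
    refine (norm_integral_le_of_norm_le
      ((integrable_quadraticWeight.const_mul (C * quadraticWeight x)).integrableOn)
      (Eventually.of_forall fun y ↦ (hC k hk x y).trans_eq (mul_assoc _ _ _).symm)).trans_eq ?_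
    rw [integral_const_mul]
    ring

lemma eulerMaclaurinMain_comp_mul {M : ℕ} {g : ℝ → E} (hg : ContDiff ℝ M g) (a : ℝ) {t : ℝ}
    (ht : 0 < t) :
    eulerMaclaurinMain M a (fun x ↦ g (x * t)) = t⁻¹ • (∫ x in Set.Ioi (0 : ℝ), g x) -
      ∑ m ∈ Finset.range M, (bernoulliCoeff (m + 1) a * t ^ m) • iteratedDeriv m g 0 := by
  rw [eulerMaclaurinMain, integral_comp_mul_right_Ioi g 0 ht, zero_mul]
  congr 1
  refine Finset.sum_congr rfl fun m hm ↦ ?_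
  rw [iteratedDeriv_comp_mul_right (hg.of_le (mod_cast (Finset.mem_range.1 hm).le)), zero_mul,
    smul_smul]

lemma eulerMaclaurinMain_slice (F : 𝓢(ℝ × ℝ, E)) (M : ℕ) (a x : ℝ) {t : ℝ} (ht : 0 < t) :
    eulerMaclaurinMain M a (fun y ↦ F (x, y * t)) =
      t⁻¹ • (∫ y in Set.Ioi (0 : ℝ), F (x, y)) - ∑ m ∈ Finset.range M,
        (bernoulliCoeff (m + 1) a * t ^ m) • iteratedDeriv m (fun y ↦ F (x, y)) 0 :=
  eulerMaclaurinMain_comp_mul ((F.smooth M).comp (contDiff_prodMk_right x)) a ht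

lemma exists_quadraticDecay_eulerMaclaurinMain_slice (F : 𝓢(ℝ × ℝ, E)) (M r : ℕ) (a : ℝ) :
    ∃ C, ∀ t, 0 < t → t ≤ 1 →
      QuadraticDecay r (C * t⁻¹) (fun x ↦ eulerMaclaurinMain M a (fun y ↦ F (x, y * t))) := by
  obtain ⟨D, hD⟩ := exists_quadraticDecay_integral_slice F (Set.Ioi 0) r
  choose B hB using exists_quadraticDecay_iteratedDeriv_slice F r
  refine ⟨D + ∑ m ∈ Finset.range M, |bernoulliCoeff (m + 1) a| * B m, fun t ht ht1 ↦ ?_⟩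
  simp only [eulerMaclaurinMain_slice F M a _ ht]
  refine ((hD.const_smul t⁻¹).sub (.sum fun m _ ↦ (hB m).const_smul _)).mono ?_
  rw [add_mul, Finset.sum_mul, abs_of_pos (inv_pos.2 ht), mul_comm D]
  refine add_le_add_right (Finset.sum_le_sum fun m _ ↦ ?_) _
  rw [abs_mul, abs_of_pos (pow_pos ht m), mul_right_comm]
  have B_nonneg := (hB m).nonneg
  gcongr
  exact (pow_le_one₀ ht.le ht1).trans ((one_le_inv₀ ht).2 ht1)

lemma contDiff_eulerMaclaurinMain_slice (F : 𝓢(ℝ × ℝ, E)) (M r : ℕ) (b : ℝ) {t : ℝ} (ht : 0 < t) :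
    ContDiff ℝ r (fun x ↦ eulerMaclaurinMain M b (fun y ↦ F (x, y * t))) := by
  obtain ⟨D, hD⟩ := exists_quadraticDecay_integral_slice F (Set.Ioi 0) r
  choose B hB using exists_quadraticDecay_iteratedDeriv_slice F r
  simp only [eulerMaclaurinMain_slice F M b _ ht]
  exact (hD.contDiff.const_smul _).sub (ContDiff.sum fun m _ ↦ (hB m).contDiff.const_smul _)

lemma integral_integral_slice_swap (F : 𝓢(ℝ × ℝ, E)) (s u : Set ℝ) :
    ∫ x in s, ∫ y in u, F (x, y) = ∫ y in u, ∫ x in s, F (x, y) := by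
  refine integral_integral_swap (f := fun x y ↦ F (x, y)) ?_
  rw [Measure.prod_restrict]
  exact (F.integrable (μ := (volume : Measure ℝ).prod volume)).integrableOn

lemma integral_eulerMaclaurinMain_slice (F : 𝓢(ℝ × ℝ, E)) (M : ℕ) (b : ℝ) {t : ℝ} (ht : 0 < t) :
    ∫ x in Set.Ioi (0 : ℝ), eulerMaclaurinMain M b (fun y ↦ F (x, y * t)) =
      t⁻¹ • (∫ y in Set.Ioi (0 : ℝ), ∫ x in Set.Ioi (0 : ℝ), F (x, y)) -
        ∑ m ∈ Finset.range M, (bernoulliCoeff (m + 1) b * t ^ m) •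
          ∫ x in Set.Ioi (0 : ℝ), iteratedDeriv m (fun y ↦ F (x, y)) 0 := by
  obtain ⟨D, hD⟩ := exists_quadraticDecay_integral_slice F (Set.Ioi 0) 0
  choose B hB using exists_quadraticDecay_iteratedDeriv_slice F 0
  simp only [eulerMaclaurinMain_slice F M b _ ht]
  rw [integral_sub (hD.const_smul t⁻¹).integrable.integrableOn
      (integrable_finsetSum _ fun m _ ↦ ((hB m).const_smul _).integrable.integrableOn),
    integral_finsetSum _ fun m _ ↦ ((hB m).const_smul _).integrable.integrableOn]
  simp only [integral_smul, integral_integral_slice_swap]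

lemma iteratedDeriv_eulerMaclaurinMain_slice (F : 𝓢(ℝ × ℝ, E)) (M k : ℕ) (b x : ℝ) {t : ℝ}
    (ht : 0 < t) :
    iteratedDeriv k (fun x ↦ eulerMaclaurinMain M b (fun y ↦ F (x, y * t))) x =
      t⁻¹ • (∫ y in Set.Ioi (0 : ℝ), iteratedDeriv k (fun z ↦ F (z, y)) x) -
        ∑ m ∈ Finset.range M, (bernoulliCoeff (m + 1) b * t ^ m) •
          iteratedDeriv k (fun z ↦ iteratedDeriv m (fun y ↦ F (z, y)) 0) x := by
  obtain ⟨D, hD⟩ := exists_quadraticDecay_integral_slice F (Set.Ioi 0) k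
  choose B hB using exists_quadraticDecay_iteratedDeriv_slice F k
  simp only [eulerMaclaurinMain_slice F M b _ ht]
  rw [iteratedDeriv_fun_sub (hD.contDiff.const_smul _).contDiffAt
      (ContDiff.sum fun m _ ↦ (hB m).contDiff.const_smul _).contDiffAt,
    iteratedDeriv_fun_sum fun m _ ↦ ((hB m).contDiff.const_smul _).contDiffAt]
  simp only [iteratedDeriv_fun_const_smul_field, iteratedDeriv_integral_slice]

lemma eulerMaclaurinMain_eulerMaclaurinMain_comp_mul (F : 𝓢(ℝ × ℝ, E)) (M : ℕ) (a b : ℝ) {t : ℝ}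
    (ht : 0 < t) :
    eulerMaclaurinMain M a (fun x ↦ eulerMaclaurinMain M b (fun y ↦ F (x * t, y * t))) =
      (1 / t ^ 2) • (∫ y in Set.Ioi (0 : ℝ), ∫ x in Set.Ioi (0 : ℝ), F (x, y)) -
        (∑ m ∈ Finset.range M, (bernoulliCoeff (m + 1) b * t ^ ((m : ℤ) - 1)) •
          ∫ x in Set.Ioi (0 : ℝ), iteratedDeriv m (fun y ↦ F (x, y)) 0) -
        (∑ m ∈ Finset.range M, (bernoulliCoeff (m + 1) a * t ^ ((m : ℤ) - 1)) •
          ∫ y in Set.Ioi (0 : ℝ), iteratedDeriv m (fun x ↦ F (x, y)) 0) +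
        ∑ k ∈ Finset.range M, ∑ m ∈ Finset.range M,
          (bernoulliCoeff (k + 1) a * bernoulliCoeff (m + 1) b * t ^ (k + m)) •
            iteratedDeriv k (fun x ↦ iteratedDeriv m (fun y ↦ F (x, y)) 0) 0 := by
  have zpow_eq (m : ℕ) : t ^ ((m : ℤ) - 1) = t ^ m * t⁻¹ := by
    rw [zpow_sub_one₀ ht.ne', zpow_natCast]
  have inner_eq (k : ℕ) :
      (bernoulliCoeff (k + 1) a * t ^ k) •
          iteratedDeriv k (fun x ↦ eulerMaclaurinMain M b (fun y ↦ F (x, y * t))) 0 =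
        (bernoulliCoeff (k + 1) a * t ^ ((k : ℤ) - 1)) •
            (∫ y in Set.Ioi (0 : ℝ), iteratedDeriv k (fun x ↦ F (x, y)) 0) -
          ∑ m ∈ Finset.range M,
            (bernoulliCoeff (k + 1) a * bernoulliCoeff (m + 1) b * t ^ (k + m)) •
              iteratedDeriv k (fun x ↦ iteratedDeriv m (fun y ↦ F (x, y)) 0) 0 := by
    rw [iteratedDeriv_eulerMaclaurinMain_slice F M k b 0 ht, smul_sub, smul_smul, Finset.smul_sum]
    simp only [smul_smul, zpow_eq, pow_add, mul_assoc, mul_left_comm]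
  have outer_coeff_eq (m : ℕ) : t⁻¹ * (bernoulliCoeff (m + 1) b * t ^ m) =
      bernoulliCoeff (m + 1) b * t ^ ((m : ℤ) - 1) := by rw [zpow_eq]; ring
  have inv_mul_inv_eq : t⁻¹ * t⁻¹ = 1 / t ^ 2 := by ring
  rw [eulerMaclaurinMain_comp_mul (contDiff_eulerMaclaurinMain_slice F M M b ht) a ht,
    integral_eulerMaclaurinMain_slice F M b ht, smul_sub, smul_smul, Finset.smul_sum]
  simp only [inner_eq, Finset.sum_sub_distrib, smul_smul, outer_coeff_eq, inv_mul_inv_eq, sub_add]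

variable [CompleteSpace E]

lemma summable_schwartz_lattice (F : 𝓢(ℝ × ℝ, E)) (a b : ℝ) {t : ℝ} (ht : 0 < t) :
    Summable fun n : ℕ × ℕ ↦ F ((n.1 + a) * t, (n.2 + b) * t) := by
  obtain ⟨C, -, hC⟩ := exists_norm_schwartz_le_quadraticWeight F
  have weights_summable := (summable_quadraticWeight_natCast_add_mul ht a).mul_of_nonneg
    (summable_quadraticWeight_natCast_add_mul ht b) (fun _ ↦ (quadraticWeight_pos _).le)
    fun _ ↦ (quadraticWeight_pos _).le
  exact (weights_summable.mul_left C).of_norm_bounded fun n ↦ hC _ _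

lemma exists_norm_tsum_sub_tsum_eulerMaclaurinMain_slice_le (F : 𝓢(ℝ × ℝ, E)) (M : ℕ) (a b : ℝ) :
    ∃ K, ∀ t, 0 < t → t ≤ 1 →
      ‖∑' n : ℕ × ℕ, F ((n.1 + a) * t, (n.2 + b) * t) -
          ∑' n : ℕ, eulerMaclaurinMain (M + 1) b (fun y ↦ F ((n + a) * t, y * t))‖ ≤
        K * t ^ M := by
  obtain ⟨C, C_nonneg, hC⟩ := exists_quadraticDecay_slice_right F (M + 2)
  obtain ⟨L, L_nonneg, hL⟩ := exists_norm_tsum_sub_eulerMaclaurinMain_le (E := E) (M + 1) b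
  refine ⟨L * C * (6 * (1 + |a| ^ 2)), fun t ht ht1 ↦ ?_⟩
  obtain ⟨D, hD⟩ := exists_quadraticDecay_eulerMaclaurinMain_slice F (M + 1) 0 b
  have lattice_summable := summable_schwartz_lattice F a b ht
  rw [lattice_summable.tsum_prod, ← lattice_summable.prod.tsum_sub
    ((hD t ht ht1).summable_natCast_add_mul ht a)]
  have weights_summable := summable_quadraticWeight_natCast_add_mul ht a
  calc _ ≤ ∑' n : ℕ, L * C * t ^ (M + 1) * quadraticWeight ((n + a) * t) :=
        tsum_of_norm_bounded (weights_summable.mul_left _).hasSum fun n ↦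
          (hL _ _ (hC ((n + a) * t)) t ht ht1).trans_eq (by ring)
    _ ≤ L * C * t ^ (M + 1) * (6 * (1 + |a| ^ 2) * t⁻¹) := by
        rw [tsum_mul_left]
        gcongr
        exact tsum_quadraticWeight_natCast_add_mul_le le_rfl ht ht1
    _ = L * C * (6 * (1 + |a| ^ 2)) * t ^ M := by
        field_simp
        ring

theorem tsum_sub_eulerMaclaurinMain_eulerMaclaurinMain_isBigO (F : 𝓢(ℝ × ℝ, E)) (M : ℕ)
    (a b : ℝ) :
    (fun t : ℝ ↦ ∑' n : ℕ × ℕ, F ((n.1 + a) * t, (n.2 + b) * t) -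
      eulerMaclaurinMain (M + 1) a
        (fun x ↦ eulerMaclaurinMain (M + 1) b (fun y ↦ F (x * t, y * t))))
      =O[𝓝[>] 0] fun t ↦ t ^ M := by
  obtain ⟨K₂, hK₂⟩ := exists_norm_tsum_sub_tsum_eulerMaclaurinMain_slice_le F M a b
  obtain ⟨C, hC⟩ := exists_quadraticDecay_eulerMaclaurinMain_slice F (M + 1) (M + 2) b
  obtain ⟨K₁, -, hK₁⟩ := exists_norm_tsum_sub_eulerMaclaurinMain_le (E := E) (M + 1) a
  refine IsBigO.of_bound (K₂ + K₁ * C) ?_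
  filter_upwards [Ioc_mem_nhdsGT (zero_lt_one' ℝ)] with t ⟨ht, ht1⟩
  rw [Real.norm_of_nonneg (pow_nonneg ht.le _), add_mul]
  refine norm_sub_le_norm_sub_add_norm_sub _ _ _ |>.trans (add_le_add (hK₂ t ht ht1) ?_)
  refine (hK₁ _ _ (hC t ht ht1) t ht ht1).trans_eq ?_
  field_simp
  ring

theorem euler_maclaurin_two_dim_general (F : 𝓢(ℝ × ℝ, E)) (α₁ α₂ : ℝ) (N : ℕ) :
    (fun t : ℝ ↦
      (∑' n : ℕ × ℕ, F ((n.1 + α₁) * t, (n.2 + α₂) * t)) -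
        (1 / t ^ 2) • (∫ x₂ in Set.Ioi (0 : ℝ), ∫ x₁ in Set.Ioi (0 : ℝ), F (x₁, x₂)) +
        (∑ m ∈ Finset.range (N + 1), (bernoulliCoeff (m + 1) α₂ * t ^ ((m : ℤ) - 1)) •
          ∫ x in Set.Ioi (0 : ℝ), iteratedDeriv m (fun y ↦ F (x, y)) 0) +
        (∑ m ∈ Finset.range (N + 1), (bernoulliCoeff (m + 1) α₁ * t ^ ((m : ℤ) - 1)) •
          ∫ x in Set.Ioi (0 : ℝ), iteratedDeriv m (fun z ↦ F (z, x)) 0) -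
        ∑ m₁ ∈ Finset.range (N + 1), ∑ m₂ ∈ Finset.range (N + 1),
          (bernoulliCoeff (m₁ + 1) α₁ * bernoulliCoeff (m₂ + 1) α₂ * t ^ (m₁ + m₂)) •
            iteratedDeriv m₁ (fun z ↦ iteratedDeriv m₂ (fun y ↦ F (z, y)) 0) 0)
      =O[𝓝[>] 0] fun t ↦ t ^ N := by
  refine (tsum_sub_eulerMaclaurinMain_eulerMaclaurinMain_isBigO F N α₁ α₂).congr' ?_ .rfl
  filter_upwards [self_mem_nhdsWithin] with t ht
  rw [eulerMaclaurinMain_eulerMaclaurinMain_comp_mul F (N + 1) α₁ α₂ ht]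
  abel

end Schwartz

theorem euler_maclaurin_two_dim (F : SchwartzMap (ℝ × ℝ) ℝ) (α₁ α₂ : ℝ)
    (hα₁ : α₁ ∈ Set.Ico (0 : ℝ) 1) (hα₂ : α₂ ∈ Set.Ico (0 : ℝ) 1) (N : ℕ) :
    (fun t : ℝ =>
      (∑' n : ℕ × ℕ, F (((n.1 : ℝ) + α₁) * t, ((n.2 : ℝ) + α₂) * t)) -
        (1 / t ^ 2) * (∫ x₂ in Set.Ioi (0 : ℝ), ∫ x₁ in Set.Ioi (0 : ℝ), F (x₁, x₂)) +
        (∑ m ∈ Finset.range (N + 1),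
          ((Polynomial.aeval α₂) (Polynomial.bernoulli (m + 1)) /
              (Nat.factorial (m + 1) : ℝ)) *
            (∫ x in Set.Ioi (0 : ℝ), iteratedDeriv m (fun y => F (x, y)) 0) *
            t ^ ((m : ℤ) - 1)) +
        (∑ m ∈ Finset.range (N + 1),
          ((Polynomial.aeval α₁) (Polynomial.bernoulli (m + 1)) /
              (Nat.factorial (m + 1) : ℝ)) *
            (∫ x in Set.Ioi (0 : ℝ), iteratedDeriv m (fun z => F (z, x)) 0) *
            t ^ ((m : ℤ) - 1)) -
        ∑ m₁ ∈ Finset.range (N + 1), ∑ m₂ ∈ Finset.range (N + 1),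
          ((Polynomial.aeval α₁) (Polynomial.bernoulli (m₁ + 1)) *
              (Polynomial.aeval α₂) (Polynomial.bernoulli (m₂ + 1)) /
              ((Nat.factorial (m₁ + 1) : ℝ) * (Nat.factorial (m₂ + 1) : ℝ))) *
            iteratedDeriv m₁ (fun z => iteratedDeriv m₂ (fun y => F (z, y)) 0) 0 *
            t ^ (m₁ + m₂)) =O[𝓝[>] (0 : ℝ)] fun t => t ^ N := by
  refine (euler_maclaurin_two_dim_general F α₁ α₂ N).congr_left fun t ↦ ?_
  simp only [bernoulliCoeff, smul_eq_mul, div_mul_div_comm, mul_right_comm]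
end

section
/- Let κ, x₁, x₂ ∈ ℝ with x₂ ≠ 0 and x₁ − κx₂ ≠ 0, and let τ = u + iv be in the upper half-plane. Then M₂(κ; x₁, x₂) = −(x₁x₂/(2v)) e^{2πiτ(x₁²+x₂²)/(4v)} J(x₁, x₂; τ) − ((x₂+κx₁)(x₁−κx₂)/(2(1+κ²)v)) e^{2πiτ((x₂+κx₁)²+(x₁−κx₂)²)/(4(1+κ²)v)} J((x₂+κx₁)/√(1+κ²), (x₁−κx₂)/√(1+κ²); τ), where J(y₁,y₂;τ) := ∫_{−τ̄}^{i∞} [e^{πi y₁² w₁/(2v)}/√(−i(w₁+τ))] ∫_{w₁}^{i∞} [e^{πi y₂² w₂/(2v)}/√(−i(w₂+τ))] dw₂ dw₁, the outer integral being along the vertical path w₁ = −τ̄ + it₁ (t₁ ∈ (0,∞)), the inner along w₂ = w₁ + it₂ (t₂ ∈ (0,∞)), and √ denoting the principal branch of the square root. -/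
open MeasureTheory Complex

/-- The function `M₂(κ; x₁, x₂)`, defined by the double integral
`−(1/π²) ∫_{ℝ²} e^{−π(u₁−ix₁)² − π(u₂−ix₂)² − 2πi(x₁(u₁−ix₁) + x₂(u₂−ix₂))}
/((u₂−ix₂)((u₁−ix₁) − κ(u₂−ix₂))) du₁ du₂`. -/
noncomputable def M2 (κ x₁ x₂ : ℝ) : ℂ :=
  -(1 / (Real.pi : ℂ) ^ 2) * ∫ u : ℝ × ℝ,
    Complex.exp (-Real.pi * ((u.1 : ℂ) - Complex.I * x₁) ^ 2 -
        Real.pi * ((u.2 : ℂ) - Complex.I * x₂) ^ 2 -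
        2 * Real.pi * Complex.I *
          (x₁ * ((u.1 : ℂ) - Complex.I * x₁) + x₂ * ((u.2 : ℂ) - Complex.I * x₂))) /
      (((u.2 : ℂ) - Complex.I * x₂) *
        (((u.1 : ℂ) - Complex.I * x₁) - κ * ((u.2 : ℂ) - Complex.I * x₂)))

/-- The iterated Eichler-type integral `J(y₁,y₂;τ)`, with the outer integral along
`w₁ = −τ̄ + it₁` and the inner along `w₂ = w₁ + it₂`. -/
noncomputable def Jint (y₁ y₂ : ℝ) (τ : ℂ) : ℂ :=
  ∫ t₁ in Set.Ioi (0 : ℝ), ∫ t₂ in Set.Ioi (0 : ℝ),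
    (Complex.I * Complex.I) *
      (Complex.exp (Real.pi * Complex.I * y₁ ^ 2 * (-(starRingEnd ℂ) τ + Complex.I * t₁) /
            (2 * τ.im)) /
          (-Complex.I * ((-(starRingEnd ℂ) τ + Complex.I * t₁) + τ)) ^ ((1 : ℂ) / 2)) *
      (Complex.exp (Real.pi * Complex.I * y₂ ^ 2 *
            ((-(starRingEnd ℂ) τ + Complex.I * t₁) + Complex.I * t₂) / (2 * τ.im)) /
          (-Complex.I * (((-(starRingEnd ℂ) τ + Complex.I * t₁) + Complex.I * t₂) + τ)) ^
            ((1 : ℂ) / 2))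

/-!
In the variables `zⱼ = uⱼ - ixⱼ` the exponential in `M₂` is the Gaussian `e^{-πN}`, where
`N = |z₁|² + |z₂|²`. The partial fraction decomposition
`1/(z₂(z₁ - κz₂)) = (z̄₁/z₂ + conj (z₂ + κz₁)/(z₁ - κz₂))/N` splits the integrand in two, and
the reflection `(z₁, z₂) ↦ ((z₂ + κz₁), (z₁ - κz₂))/√(1 + κ²)` carries one summand to the other.
Writing `e^{-πN}/(πN)` as `∫_{r > 1} e^{-πrN} dr` and exchanging the integrals leaves a product of
one-dimensional integrals, one of a Gaussian and one that the same device turns into a Gaussian.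
The result is an iterated integral of `e^{-πsx²}/√s`. On the vertical paths the exponential in
front of `J` cancels the dependence on `Re τ`, and `s = 1 + t/(2v)` turns `J` into this integral.
-/

section

open Set Function
open scoped Real ComplexConjugate

section Laplace

variable {α E : Type*} [MeasurableSpace α] {μ : Measure α} [NormedAddCommGroup E]
  [NormedSpace ℝ E] {N : α → ℝ} {f : α → E} {s δ : ℝ}

lemma integrableOn_exp_neg_mul_Ioi {a : ℝ} (ha : 0 < a) (s : ℝ) :
    IntegrableOn (fun r => Real.exp (-(r * a))) (Ioi s) := by
  simpa only [neg_mul, mul_comm a] using integrableOn_exp_mul_Ioi (neg_neg_of_pos ha) s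

lemma integral_exp_neg_mul_Ioi {a : ℝ} (ha : 0 < a) (s : ℝ) :
    ∫ r in Ioi s, Real.exp (-(r * a)) = Real.exp (-(s * a)) / a := by
  simpa only [neg_mul, mul_comm a, neg_div_neg_eq] using integral_exp_mul_Ioi (neg_neg_of_pos ha) s

lemma integrable_uncurry_exp_neg_mul_smul (hN : Measurable N) (hδ : 0 < δ) (hδN : ∀ a, δ ≤ N a)
    (hf : Integrable (fun a => Real.exp (-(s * N a)) • f a) μ) :
    Integrable (uncurry fun a r => Real.exp (-(r * N a)) • f a)
      (μ.prod (volume.restrict (Ioi s))) := by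
  have hsplit : (uncurry fun a r => Real.exp (-(r * N a)) • f a) = fun p : α × ℝ =>
      Real.exp (-((p.2 - s) * N p.1)) • Real.exp (-(s * N p.1)) • f p.1 := by
    ext ⟨a, r⟩
    rw [uncurry_apply_pair, smul_smul, ← Real.exp_add]
    ring_nf
  have hbound : Integrable
      (fun p : α × ℝ => ‖Real.exp (-(s * N p.1)) • f p.1‖ *
        (Real.exp (s * δ) * Real.exp (-(p.2 * δ)))) (μ.prod (volume.restrict (Ioi s))) :=
    hf.norm.mul_prod ((integrableOn_exp_neg_mul_Ioi hδ s).const_mul _)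
  have hmem : ∀ᵐ p ∂μ.prod (volume.restrict (Ioi s)), p.2 ∈ Ioi s :=
    Measure.quasiMeasurePreserving_snd.ae (ae_restrict_mem measurableSet_Ioi)
  rw [hsplit]
  refine hbound.mono' ?_ ?_
  · exact (by fun_prop : Measurable fun p : α × ℝ =>
      Real.exp (-((p.2 - s) * N p.1))).aestronglyMeasurable.smul hf.aestronglyMeasurable.comp_fst
  · filter_upwards [hmem] with p hp
    rw [norm_smul, mul_comm, Real.norm_of_nonneg (Real.exp_pos _).le, ← Real.exp_add]
    gcongr
    nlinarith [mul_le_mul_of_nonneg_left (hδN p.1) (sub_nonneg.mpr (le_of_lt hp))]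

variable [CompleteSpace E]

lemma integral_exp_neg_mul_smul_Ioi {a : ℝ} (ha : 0 < a) (s : ℝ) (v : E) :
    ∫ r in Ioi s, Real.exp (-(r * a)) • v = (Real.exp (-(s * a)) / a) • v := by
  rw [integral_smul_const, integral_exp_neg_mul_Ioi ha]

lemma integrable_exp_neg_mul_div_smul (hN : Measurable N) (hδ : 0 < δ) (hδN : ∀ a, δ ≤ N a)
    (hf : Integrable (fun a => Real.exp (-(s * N a)) • f a) μ) :
    Integrable (fun a => (Real.exp (-(s * N a)) / N a) • f a) μ := by
  simpa only [uncurry_apply_pair, integral_exp_neg_mul_smul_Ioi (hδ.trans_le (hδN _))]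
    using (integrable_uncurry_exp_neg_mul_smul hN hδ hδN hf).integral_prod_left

lemma integral_exp_neg_mul_div_smul [SFinite μ] (hN : Measurable N) (hδ : 0 < δ)
    (hδN : ∀ a, δ ≤ N a) (hf : Integrable (fun a => Real.exp (-(s * N a)) • f a) μ) :
    ∫ a, (Real.exp (-(s * N a)) / N a) • f a ∂μ =
      ∫ r in Ioi s, ∫ a, Real.exp (-(r * N a)) • f a ∂μ := by
  simp only [← integral_integral_swap (integrable_uncurry_exp_neg_mul_smul hN hδ hδN hf),
    integral_exp_neg_mul_smul_Ioi (hδ.trans_le (hδN _))]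

end Laplace

section ChangeOfVariables

variable {E F : Type*} [NormedAddCommGroup E] [NormedSpace ℝ E] [NormedAddCommGroup F]
  [NormedSpace ℝ F]

lemma integral_comp_add_div_Ioi (f : ℝ → E) (a b : ℝ) {c : ℝ} (hc : 0 < c) :
    ∫ t in Ioi b, f (a + t / c) = c • ∫ s in Ioi (a + b / c), f s := by
  have hshift := (measurePreserving_add_left (volume : Measure ℝ) a).setIntegral_preimage_emb
    (measurableEmbedding_addLeft a) f (Ioi (a + b / c))
  rw [preimage_const_add_Ioi, add_sub_cancel_left] at hshift
  rw [← hshift]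
  simpa only [div_eq_inv_mul, inv_inv] using
    integral_comp_mul_left_Ioi (fun t => f (a + t)) b (inv_pos.mpr hc)

lemma integral_eq_zero_of_odd {f : ℝ → E} (hf : f.Odd) : ∫ x, f x = 0 := by
  have h := integral_neg_eq_self f volume
  simp only [hf _, integral_neg] at h
  have : IsAddTorsionFree E := .of_isTorsionFree ℝ E
  exact self_eq_neg.mp h.symm

variable [FiniteDimensional ℝ E] [MeasurableSpace E] [BorelSpace E] (μ : Measure E)
  [μ.IsAddHaarMeasure] {L : E →ₗ[ℝ] E}

lemma measurePreserving_of_involutive (hL : Involutive L) : MeasurePreserving L μ μ := by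
  have hdet : LinearMap.det L * LinearMap.det L = 1 := by
    rw [← LinearMap.det_comp, (LinearMap.ext hL : L ∘ₗ L = LinearMap.id), LinearMap.det_id]
  have habs : |(LinearMap.det L)⁻¹| = 1 := by
    rw [abs_inv, inv_eq_one, ← pow_eq_one_iff_of_nonneg (abs_nonneg _) two_ne_zero, sq_abs, sq,
      hdet]
  refine ⟨L.continuous_of_finiteDimensional.measurable, ?_⟩
  rw [Measure.map_linearMap_addHaar_eq_smul_addHaar μ (left_ne_zero_of_mul_eq_one hdet), habs,
    ENNReal.ofReal_one, one_smul]

lemma integral_comp_of_involutive (hL : Involutive L) (f : E → F) :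
    ∫ v, f (L v) ∂μ = ∫ v, f v ∂μ :=
  (measurePreserving_of_involutive μ hL).integral_comp' (f := MeasurableEquiv.ofInvolutive L hL
    L.continuous_of_finiteDimensional.measurable) f

end ChangeOfVariables

section Line

variable {x s : ℝ}

/-- The real form `e^{-πsy²}/√s` of one factor of the iterated Eichler integral on the vertical
path, where `s = 1 + t/(2v) > 0`; for `s ≤ 0` the value is the junk value of division by zero. -/
noncomputable def thetaWeight (y s : ℝ) : ℝ :=
  Real.exp (-(π * s * y ^ 2)) / √s

lemma sq_norm_ofReal_sub_I_mul (u x : ℝ) : ‖(u : ℂ) - I * x‖ ^ 2 = u ^ 2 + x ^ 2 := by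
  rw [Complex.sq_norm, normSq_apply]
  simp [sq]

lemma ofReal_sub_I_mul_ne_zero (u : ℝ) (hx : x ≠ 0) : (u : ℂ) - I * x ≠ 0 := fun h => by
  simpa [hx] using congrArg Complex.im h

lemma exp_neg_sq_norm_smul_conj (s u x : ℝ) :
    Real.exp (-(s * (π * ‖(u : ℂ) - I * x‖ ^ 2))) • conj ((u : ℂ) - I * x) =
      Real.exp (-(π * s * x ^ 2)) • (((u * Real.exp (-(π * s) * u ^ 2) : ℝ) : ℂ) +
        I * x * (Real.exp (-(π * s) * u ^ 2) : ℝ)) := by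
  have hexp : Real.exp (-(s * (π * ‖(u : ℂ) - I * x‖ ^ 2))) =
      Real.exp (-(π * s * x ^ 2)) * Real.exp (-(π * s) * u ^ 2) := by
    rw [sq_norm_ofReal_sub_I_mul, ← Real.exp_add]
    ring_nf
  rw [hexp, real_smul, real_smul]
  simp only [map_sub, map_mul, conj_ofReal, conj_I, ofReal_mul]
  ring

lemma integrable_exp_neg_sq_norm_smul_conj (x : ℝ) (hs : 0 < s) :
    Integrable fun u : ℝ =>
      Real.exp (-(s * (π * ‖(u : ℂ) - I * x‖ ^ 2))) • conj ((u : ℂ) - I * x) := by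
  have hb : 0 < π * s := by positivity
  simp only [exp_neg_sq_norm_smul_conj]
  exact (((integrable_mul_exp_neg_mul_sq hb).ofReal (𝕜 := ℂ)).add
    ((integrable_exp_neg_mul_sq hb).ofReal.const_mul _)).smul (Real.exp (-(π * s * x ^ 2)))

lemma integral_exp_neg_sq_norm_smul_conj (x : ℝ) (hs : 0 < s) :
    ∫ u : ℝ, Real.exp (-(s * (π * ‖(u : ℂ) - I * x‖ ^ 2))) • conj ((u : ℂ) - I * x) =
      I * x * thetaWeight x s := by
  have hb : 0 < π * s := by positivity
  have hodd : ∫ u : ℝ, u * Real.exp (-(π * s) * u ^ 2) = 0 :=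
    integral_eq_zero_of_odd fun u => by simp
  have hgauss : ∫ u : ℝ, Real.exp (-(π * s) * u ^ 2) = (√s)⁻¹ := by
    rw [integral_gaussian, ← div_div, div_self Real.pi_ne_zero, one_div, Real.sqrt_inv]
  simp only [exp_neg_sq_norm_smul_conj]
  rw [integral_smul, integral_add (integrable_mul_exp_neg_mul_sq hb).ofReal
    ((integrable_exp_neg_mul_sq hb).ofReal.const_mul _), integral_const_mul,
    integral_complex_ofReal, integral_complex_ofReal, hodd, hgauss, real_smul, thetaWeight]
  push_cast
  ring

lemma sq_norm_inv_smul_conj (a : ℝ) (z : ℂ) :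
    (a / (π * ‖z‖ ^ 2)) • conj z = π⁻¹ • a • z⁻¹ := by
  rw [Complex.inv_def, Complex.sq_norm]
  simp only [real_smul]
  push_cast
  ring

lemma sq_le_sq_norm_ofReal_sub_I_mul (u x : ℝ) : x ^ 2 ≤ ‖(u : ℂ) - I * x‖ ^ 2 := by
  rw [sq_norm_ofReal_sub_I_mul]
  exact le_add_of_nonneg_left (sq_nonneg u)

lemma integrable_exp_neg_sq_norm_smul_inv (hx : x ≠ 0) (hs : 0 < s) :
    Integrable fun u : ℝ =>
      Real.exp (-(s * (π * ‖(u : ℂ) - I * x‖ ^ 2))) • ((u : ℂ) - I * x)⁻¹ := by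
  have h := integrable_exp_neg_mul_div_smul (δ := π * x ^ 2) (by fun_prop) (by positivity)
    (fun u => mul_le_mul_of_nonneg_left (sq_le_sq_norm_ofReal_sub_I_mul u x) Real.pi_nonneg)
    (integrable_exp_neg_sq_norm_smul_conj x hs)
  simp only [sq_norm_inv_smul_conj] at h
  exact (integrable_smul_iff (inv_ne_zero Real.pi_ne_zero) _).mp h

lemma integral_exp_neg_sq_norm_smul_inv (hx : x ≠ 0) (hs : 0 < s) :
    ∫ u : ℝ, Real.exp (-(s * (π * ‖(u : ℂ) - I * x‖ ^ 2))) • ((u : ℂ) - I * x)⁻¹ =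
      π * (I * x * ∫ r in Ioi s, thetaWeight x r) := by
  have h := integral_exp_neg_mul_div_smul (δ := π * x ^ 2) (by fun_prop) (by positivity)
    (fun u => mul_le_mul_of_nonneg_left (sq_le_sq_norm_ofReal_sub_I_mul u x) Real.pi_nonneg)
    (integrable_exp_neg_sq_norm_smul_conj x hs)
  rw [setIntegral_congr_fun measurableSet_Ioi fun r hr =>
    integral_exp_neg_sq_norm_smul_conj x (hs.trans hr), integral_const_mul,
    integral_complex_ofReal] at h
  simp only [sq_norm_inv_smul_conj, integral_smul] at h
  rw [← real_smul, ← h, smul_inv_smul₀ Real.pi_ne_zero]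

end Line

section Plane

variable {κ x₁ x₂ : ℝ}

/-- The iterated integral `∫_{s > 1} e^{-πsy₁²}/√s ∫_{r > s} e^{-πry₂²}/√r dr ds`, a real form of
`J(y₁, y₂; τ)` in which `τ` no longer appears. -/
noncomputable def doubleThetaIntegral (y₁ y₂ : ℝ) : ℝ :=
  ∫ s in Ioi (1 : ℝ), thetaWeight y₁ s * ∫ r in Ioi s, thetaWeight y₂ r

/-- The summand `e^{-πN}/(πN) · z̄/w`, `N = |z|² + |w|²`, of the partial fraction decomposition of
the integrand of `M₂` in the variables `zⱼ = uⱼ - ixⱼ`: it is applied to `(z₁, z₂)` and to the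
reflection of that pair. -/
noncomputable def gaussianKernel (z w : ℂ) : ℂ :=
  (Real.exp (-(π * (‖z‖ ^ 2 + ‖w‖ ^ 2))) / (π * (‖z‖ ^ 2 + ‖w‖ ^ 2))) • (conj z / w)

lemma exp_neg_add_sq_norm_smul_conj_div (s : ℝ) (z w : ℂ) :
    Real.exp (-(s * (π * (‖z‖ ^ 2 + ‖w‖ ^ 2)))) • (conj z / w) =
      (Real.exp (-(s * (π * ‖z‖ ^ 2))) • conj z) * (Real.exp (-(s * (π * ‖w‖ ^ 2))) • w⁻¹) := by
  rw [smul_mul_smul_comm, ← Real.exp_add, div_eq_mul_inv]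
  ring_nf

lemma integrable_exp_neg_add_sq_norm_smul_conj_div (x₁ : ℝ) (hx₂ : x₂ ≠ 0) {s : ℝ} (hs : 0 < s) :
    Integrable fun u : ℝ × ℝ =>
      Real.exp (-(s * (π * (‖(u.1 : ℂ) - I * x₁‖ ^ 2 + ‖(u.2 : ℂ) - I * x₂‖ ^ 2)))) •
        (conj ((u.1 : ℂ) - I * x₁) / ((u.2 : ℂ) - I * x₂)) := by
  simp only [exp_neg_add_sq_norm_smul_conj_div]
  exact (integrable_exp_neg_sq_norm_smul_conj x₁ hs).mul_prod
    (integrable_exp_neg_sq_norm_smul_inv hx₂ hs)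

lemma integral_exp_neg_add_sq_norm_smul_conj_div (x₁ : ℝ) (hx₂ : x₂ ≠ 0) {s : ℝ} (hs : 0 < s) :
    ∫ u : ℝ × ℝ,
      Real.exp (-(s * (π * (‖(u.1 : ℂ) - I * x₁‖ ^ 2 + ‖(u.2 : ℂ) - I * x₂‖ ^ 2)))) •
        (conj ((u.1 : ℂ) - I * x₁) / ((u.2 : ℂ) - I * x₂)) =
      ((-(π * (x₁ * x₂)) * (thetaWeight x₁ s * ∫ r in Ioi s, thetaWeight x₂ r) : ℝ) : ℂ) := by
  simp only [exp_neg_add_sq_norm_smul_conj_div]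
  rw [Measure.volume_eq_prod, integral_prod_mul
    (fun u : ℝ => Real.exp (-(s * (π * ‖(u : ℂ) - I * x₁‖ ^ 2))) • conj ((u : ℂ) - I * x₁))
    (fun u : ℝ => Real.exp (-(s * (π * ‖(u : ℂ) - I * x₂‖ ^ 2))) • ((u : ℂ) - I * x₂)⁻¹),
    integral_exp_neg_sq_norm_smul_conj x₁ hs, integral_exp_neg_sq_norm_smul_inv hx₂ hs]
  push_cast
  linear_combination π * x₁ * x₂ * thetaWeight x₁ s *
    ((∫ r in Ioi s, thetaWeight x₂ r : ℝ) : ℂ) * I_mul_I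

lemma sq_le_add_sq_norm_ofReal_sub_I_mul (u₁ u₂ x₁ x₂ : ℝ) :
    x₂ ^ 2 ≤ ‖(u₁ : ℂ) - I * x₁‖ ^ 2 + ‖(u₂ : ℂ) - I * x₂‖ ^ 2 :=
  (sq_le_sq_norm_ofReal_sub_I_mul u₂ x₂).trans (le_add_of_nonneg_left (sq_nonneg _))

lemma integrable_gaussianKernel (x₁ : ℝ) (hx₂ : x₂ ≠ 0) :
    Integrable fun u : ℝ × ℝ => gaussianKernel ((u.1 : ℂ) - I * x₁) ((u.2 : ℂ) - I * x₂) := by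
  simpa only [one_mul, gaussianKernel] using
    integrable_exp_neg_mul_div_smul (s := 1) (δ := π * x₂ ^ 2) (by fun_prop) (by positivity)
    (fun u => by gcongr; exact sq_le_add_sq_norm_ofReal_sub_I_mul u.1 u.2 x₁ x₂)
    (integrable_exp_neg_add_sq_norm_smul_conj_div x₁ hx₂ one_pos)

lemma integral_gaussianKernel (x₁ : ℝ) (hx₂ : x₂ ≠ 0) :
    ∫ u : ℝ × ℝ, gaussianKernel ((u.1 : ℂ) - I * x₁) ((u.2 : ℂ) - I * x₂) =
      ((-(π * (x₁ * x₂)) * doubleThetaIntegral x₁ x₂ : ℝ) : ℂ) := by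
  have h := integral_exp_neg_mul_div_smul (s := 1) (δ := π * x₂ ^ 2)
    (by fun_prop) (by positivity)
    (fun u => by gcongr; exact sq_le_add_sq_norm_ofReal_sub_I_mul u.1 u.2 x₁ x₂)
    (integrable_exp_neg_add_sq_norm_smul_conj_div x₁ hx₂ one_pos)
  rw [setIntegral_congr_fun measurableSet_Ioi fun s hs =>
    integral_exp_neg_add_sq_norm_smul_conj_div x₁ hx₂ (one_pos.trans hs),
    integral_complex_ofReal, integral_const_mul] at h
  simpa only [one_mul, gaussianKernel, doubleThetaIntegral] using h

/-- The reflection of the plane whose two coordinates are `(u₂ + κu₁)/√(1+κ²)` and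
`(u₁ - κu₂)/√(1+κ²)`; the second one is the linear form in the denominator of `M₂`, normalized. -/
noncomputable def tiltReflection (κ : ℝ) : ℝ × ℝ →ₗ[ℝ] ℝ × ℝ :=
  (√(1 + κ ^ 2))⁻¹ • (LinearMap.snd ℝ ℝ ℝ + κ • LinearMap.fst ℝ ℝ ℝ).prod
    (LinearMap.fst ℝ ℝ ℝ - κ • LinearMap.snd ℝ ℝ ℝ)

lemma tiltReflection_apply (κ : ℝ) (u : ℝ × ℝ) :
    tiltReflection κ u =
      ((u.2 + κ * u.1) / √(1 + κ ^ 2), (u.1 - κ * u.2) / √(1 + κ ^ 2)) := by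
  simp [tiltReflection, div_eq_inv_mul]

lemma involutive_tiltReflection (κ : ℝ) : Involutive (tiltReflection κ) := fun u => by
  have hpos : 0 < 1 + κ ^ 2 := by positivity
  have hsq : √(1 + κ ^ 2) ^ 2 = 1 + κ ^ 2 := Real.sq_sqrt hpos.le
  have hne : √(1 + κ ^ 2) ≠ 0 := (Real.sqrt_pos.mpr hpos).ne'
  ext <;> simp only [tiltReflection_apply] <;> field_simp <;> rw [hsq] <;> ring

lemma sq_norm_add_smul_add_sq_norm_sub_smul {V : Type*} [NormedAddCommGroup V]
    [InnerProductSpace ℝ V] (κ : ℝ) (z w : V) :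
    ‖w + κ • z‖ ^ 2 + ‖z - κ • w‖ ^ 2 = (1 + κ ^ 2) * (‖z‖ ^ 2 + ‖w‖ ^ 2) := by
  rw [norm_add_sq_real, norm_sub_sq_real, inner_smul_right, inner_smul_right, norm_smul, norm_smul,
    mul_pow, mul_pow, Real.norm_eq_abs, sq_abs, real_inner_comm]
  ring

lemma gaussianKernel_add_gaussianKernel_reflection {c : ℝ} (hc : c ^ 2 = 1 + κ ^ 2) {z w : ℂ}
    (hw : w ≠ 0) (hzw : z - κ * w ≠ 0) :
    gaussianKernel z w + gaussianKernel ((w + κ * z) / c) ((z - κ * w) / c) =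
      (π : ℂ)⁻¹ * (Real.exp (-(π * (‖z‖ ^ 2 + ‖w‖ ^ 2))) / (w * (z - κ * w))) := by
  have hc0 : c ≠ 0 := by
    rintro rfl
    nlinarith [sq_nonneg κ]
  have hcC : (c : ℂ) ≠ 0 := ofReal_ne_zero.mpr hc0
  have hpi : (π : ℂ) ≠ 0 := ofReal_ne_zero.mpr Real.pi_ne_zero
  have hnorm : ‖(w + κ * z) / c‖ ^ 2 + ‖(z - κ * w) / c‖ ^ 2 = ‖z‖ ^ 2 + ‖w‖ ^ 2 := by
    rw [norm_div, norm_div, div_pow, div_pow, ← add_div, norm_real, Real.norm_eq_abs, sq_abs, hc,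
      ← real_smul, ← real_smul, sq_norm_add_smul_add_sq_norm_sub_smul,
      mul_div_cancel_left₀ _ (hc ▸ pow_ne_zero 2 hc0)]
  have hconj : conj ((w + κ * z) / c) / ((z - κ * w) / c) =
      (conj w + κ * conj z) / (z - κ * w) := by
    simp only [map_div₀, map_add, map_mul, conj_ofReal]
    exact div_div_div_cancel_right₀ hcC _ _
  have hfrac : conj z / w + (conj w + κ * conj z) / (z - κ * w) =
      ((‖z‖ ^ 2 + ‖w‖ ^ 2 : ℝ) : ℂ) / (w * (z - κ * w)) := by
    rw [div_add_div _ _ hw hzw, Complex.sq_norm, Complex.sq_norm, ofReal_add, ← mul_conj,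
      ← mul_conj]
    ring
  have hN : ((‖z‖ ^ 2 + ‖w‖ ^ 2 : ℝ) : ℂ) ≠ 0 := by
    have := norm_pos_iff.mpr hw
    exact ofReal_ne_zero.mpr (by positivity)
  rw [gaussianKernel, gaussianKernel, hnorm, hconj, ← smul_add, hfrac, real_smul, ofReal_div,
    ofReal_mul π]
  field_simp

lemma cexp_M2_exponent (u₁ u₂ x₁ x₂ : ℝ) :
    Complex.exp (-π * ((u₁ : ℂ) - I * x₁) ^ 2 - π * ((u₂ : ℂ) - I * x₂) ^ 2 -
        2 * π * I * (x₁ * ((u₁ : ℂ) - I * x₁) + x₂ * ((u₂ : ℂ) - I * x₂))) =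
      Real.exp (-(π * (‖(u₁ : ℂ) - I * x₁‖ ^ 2 + ‖(u₂ : ℂ) - I * x₂‖ ^ 2))) := by
  rw [sq_norm_ofReal_sub_I_mul, sq_norm_ofReal_sub_I_mul, ofReal_exp]
  congr 1
  push_cast
  linear_combination (π * (x₁ ^ 2 + x₂ ^ 2) : ℂ) * I_mul_I

lemma M2_integrand_eq (hx₂ : x₂ ≠ 0) (hx : x₁ - κ * x₂ ≠ 0) (u : ℝ × ℝ) :
    Complex.exp (-π * ((u.1 : ℂ) - I * x₁) ^ 2 - π * ((u.2 : ℂ) - I * x₂) ^ 2 -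
        2 * π * I * (x₁ * ((u.1 : ℂ) - I * x₁) + x₂ * ((u.2 : ℂ) - I * x₂))) /
      (((u.2 : ℂ) - I * x₂) * (((u.1 : ℂ) - I * x₁) - κ * ((u.2 : ℂ) - I * x₂))) =
    π * (gaussianKernel ((u.1 : ℂ) - I * x₁) ((u.2 : ℂ) - I * x₂) +
      gaussianKernel ((tiltReflection κ u).1 - I * (tiltReflection κ (x₁, x₂)).1)
        ((tiltReflection κ u).2 - I * (tiltReflection κ (x₁, x₂)).2)) := by
  have hpi : (π : ℂ) ≠ 0 := ofReal_ne_zero.mpr Real.pi_ne_zero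
  have hden : ((u.1 : ℂ) - I * x₁) - κ * ((u.2 : ℂ) - I * x₂) ≠ 0 := by
    convert ofReal_sub_I_mul_ne_zero (u.1 - κ * u.2) hx using 1
    push_cast
    ring
  rw [cexp_M2_exponent, ← mul_inv_cancel_left₀ hpi (_ / _),
    ← gaussianKernel_add_gaussianKernel_reflection (Real.sq_sqrt (by positivity : 0 ≤ 1 + κ ^ 2))
      (ofReal_sub_I_mul_ne_zero u.2 hx₂) hden]
  simp only [tiltReflection_apply]
  push_cast
  ring_nf

lemma M2_eq_add_doubleThetaIntegral (hx₂ : x₂ ≠ 0) (hx : x₁ - κ * x₂ ≠ 0) :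
    M2 κ x₁ x₂ = x₁ * x₂ * doubleThetaIntegral x₁ x₂ +
      (tiltReflection κ (x₁, x₂)).1 * (tiltReflection κ (x₁, x₂)).2 *
        doubleThetaIntegral (tiltReflection κ (x₁, x₂)).1 (tiltReflection κ (x₁, x₂)).2 := by
  have hpi : (π : ℂ) ≠ 0 := ofReal_ne_zero.mpr Real.pi_ne_zero
  have hy : (tiltReflection κ (x₁, x₂)).2 ≠ 0 := by
    rw [tiltReflection_apply]
    exact div_ne_zero hx (Real.sqrt_pos.mpr (by positivity)).ne'
  simp only [M2, M2_integrand_eq hx₂ hx]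
  set y := tiltReflection κ (x₁, x₂)
  have hrefl := involutive_tiltReflection κ
  have hint : Integrable fun u : ℝ × ℝ =>
      gaussianKernel ((tiltReflection κ u).1 - I * y.1) ((tiltReflection κ u).2 - I * y.2) :=
    (measurePreserving_of_involutive volume hrefl).integrable_comp_of_integrable
      (integrable_gaussianKernel y.1 hy)
  rw [integral_const_mul, integral_add (integrable_gaussianKernel x₁ hx₂) hint,
    integral_comp_of_involutive volume hrefl
      fun v => gaussianKernel ((v.1 : ℂ) - I * y.1) ((v.2 : ℂ) - I * y.2),
    integral_gaussianKernel x₁ hx₂, integral_gaussianKernel y.1 hy]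
  push_cast
  field_simp
  ring

end Plane

section Eichler

variable {τ : ℂ}

lemma neg_I_mul_neg_conj_add (τ : ℂ) (t : ℝ) :
    -I * (-conj τ + I * t + τ) = ((2 * τ.im + t : ℝ) : ℂ) := by
  have h := sub_conj τ
  push_cast at h ⊢
  linear_combination -I * h - (2 * τ.im + t : ℂ) * I_mul_I

lemma ofReal_cpow_half {a : ℝ} (ha : 0 ≤ a) : (a : ℂ) ^ ((1 : ℂ) / 2) = (√a : ℝ) := by
  rw [Real.sqrt_eq_rpow, ofReal_cpow ha]
  norm_num

lemma cexp_mul_eichler_factor (hτ : 0 < τ.im) (y : ℝ) {t : ℝ} (ht : 0 ≤ t) :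
    Complex.exp (2 * π * I * τ * ((y ^ 2 / (4 * τ.im) : ℝ) : ℂ)) *
        (Complex.exp (π * I * y ^ 2 * (-conj τ + I * t) / (2 * τ.im)) /
          (-I * (-conj τ + I * t + τ)) ^ ((1 : ℂ) / 2)) =
      (((√(2 * τ.im))⁻¹ * thetaWeight y (1 + t / (2 * τ.im)) : ℝ) : ℂ) := by
  have him : (τ.im : ℂ) ≠ 0 := ofReal_ne_zero.mpr hτ.ne'
  have hexponent : 2 * π * I * τ * ((y ^ 2 / (4 * τ.im) : ℝ) : ℂ) +
      π * I * y ^ 2 * (-conj τ + I * t) / (2 * τ.im) =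
      ((-(π * (1 + t / (2 * τ.im)) * y ^ 2) : ℝ) : ℂ) := by
    have h := neg_I_mul_neg_conj_add τ t
    push_cast at h ⊢
    field_simp
    linear_combination -4 * y ^ 2 * h
  have hsqrt : √(2 * τ.im + t) = √(2 * τ.im) * √(1 + t / (2 * τ.im)) := by
    rw [← Real.sqrt_mul (by positivity)]
    congr 1
    field_simp
  rw [neg_I_mul_neg_conj_add, ofReal_cpow_half (by positivity), mul_div_assoc', ← Complex.exp_add,
    hexponent, ← ofReal_exp, ← ofReal_div, hsqrt, thetaWeight]
  congr 1
  field_simp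

lemma cexp_mul_Jint_integrand (hτ : 0 < τ.im) (y₁ y₂ : ℝ) {t₁ t₂ : ℝ} (ht₁ : 0 ≤ t₁)
    (ht₂ : 0 ≤ t₂) :
    Complex.exp (2 * π * I * τ * (((y₁ ^ 2 + y₂ ^ 2) / (4 * τ.im) : ℝ) : ℂ)) *
      ((I * I) * (Complex.exp (π * I * y₁ ^ 2 * (-conj τ + I * t₁) / (2 * τ.im)) /
          (-I * ((-conj τ + I * t₁) + τ)) ^ ((1 : ℂ) / 2)) *
        (Complex.exp (π * I * y₂ ^ 2 * ((-conj τ + I * t₁) + I * t₂) / (2 * τ.im)) /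
          (-I * (((-conj τ + I * t₁) + I * t₂) + τ)) ^ ((1 : ℂ) / 2))) =
      ((-(2 * τ.im)⁻¹ * thetaWeight y₁ (1 + t₁ / (2 * τ.im)) *
        thetaWeight y₂ (1 + t₁ / (2 * τ.im) + t₂ / (2 * τ.im)) : ℝ) : ℂ) := by
  have h₁ := cexp_mul_eichler_factor hτ y₁ ht₁
  have h₂ := cexp_mul_eichler_factor hτ y₂ (add_nonneg ht₁ ht₂)
  have hsqrt : (√(2 * τ.im))⁻¹ * (√(2 * τ.im))⁻¹ = (2 * τ.im)⁻¹ := by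
    rw [← mul_inv, Real.mul_self_sqrt (by positivity)]
  rw [ofReal_add, mul_add I, ← add_assoc] at h₂
  rw [add_div, ofReal_add, mul_add, Complex.exp_add, I_mul_I, ← hsqrt, add_assoc 1, ← add_div]
  have hprod := congrArg₂ (· * ·) h₁ h₂
  simp only [ofReal_mul, ofReal_neg] at hprod ⊢
  linear_combination -hprod

lemma cexp_mul_Jint (hτ : 0 < τ.im) (y₁ y₂ : ℝ) :
    Complex.exp (2 * π * I * τ * (((y₁ ^ 2 + y₂ ^ 2) / (4 * τ.im) : ℝ) : ℂ)) * Jint y₁ y₂ τ =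
      ((-(2 * τ.im) * doubleThetaIntegral y₁ y₂ : ℝ) : ℂ) := by
  have hv : 0 < 2 * τ.im := by positivity
  have hinner : ∀ t₁ ∈ Ioi (0 : ℝ), ∫ t₂ in Ioi (0 : ℝ), -(2 * τ.im)⁻¹ *
      thetaWeight y₁ (1 + t₁ / (2 * τ.im)) *
        thetaWeight y₂ (1 + t₁ / (2 * τ.im) + t₂ / (2 * τ.im)) =
      -(thetaWeight y₁ (1 + t₁ / (2 * τ.im)) *
        ∫ r in Ioi (1 + t₁ / (2 * τ.im)), thetaWeight y₂ r) := fun t₁ _ => by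
    rw [integral_const_mul, integral_comp_add_div_Ioi (thetaWeight y₂) _ _ hv, zero_div, add_zero,
      smul_eq_mul]
    field_simp
  rw [Jint, ← integral_const_mul, setIntegral_congr_fun measurableSet_Ioi fun t₁ ht₁ => by
      rw [← integral_const_mul, setIntegral_congr_fun measurableSet_Ioi fun t₂ ht₂ =>
        cexp_mul_Jint_integrand hτ y₁ y₂ (le_of_lt ht₁) (le_of_lt ht₂), integral_complex_ofReal,
        hinner t₁ ht₁],
    integral_complex_ofReal, integral_neg, integral_comp_add_div_Ioi
      (fun s => thetaWeight y₁ s * ∫ r in Ioi s, thetaWeight y₂ r) _ _ hv,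
    zero_div, add_zero, smul_eq_mul, ← neg_mul, doubleThetaIntegral]

end Eichler

end

theorem M2_eq_double_eichler (κ x₁ x₂ : ℝ) (hx₂ : x₂ ≠ 0) (hx : x₁ - κ * x₂ ≠ 0)
    (τ : ℂ) (hτ : 0 < τ.im) :
    M2 κ x₁ x₂ =
      -((x₁ * x₂ / (2 * τ.im) : ℝ) : ℂ) *
          Complex.exp (2 * Real.pi * Complex.I * τ *
            (((x₁ ^ 2 + x₂ ^ 2) / (4 * τ.im) : ℝ) : ℂ)) * Jint x₁ x₂ τ -
        (((x₂ + κ * x₁) * (x₁ - κ * x₂) / (2 * (1 + κ ^ 2) * τ.im) : ℝ) : ℂ) *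
          Complex.exp (2 * Real.pi * Complex.I * τ *
            ((((x₂ + κ * x₁) ^ 2 + (x₁ - κ * x₂) ^ 2) / (4 * (1 + κ ^ 2) * τ.im) : ℝ) : ℂ)) *
          Jint ((x₂ + κ * x₁) / Real.sqrt (1 + κ ^ 2))
            ((x₁ - κ * x₂) / Real.sqrt (1 + κ ^ 2)) τ := by
  have hpos : 0 < 1 + κ ^ 2 := by positivity
  have hsq : √(1 + κ ^ 2) ^ 2 = 1 + κ ^ 2 := Real.sq_sqrt hpos.le
  set y₁ := (x₂ + κ * x₁) / √(1 + κ ^ 2) with hy₁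
  set y₂ := (x₁ - κ * x₂) / √(1 + κ ^ 2) with hy₂
  have hM2 : M2 κ x₁ x₂ = x₁ * x₂ * doubleThetaIntegral x₁ x₂ +
      y₁ * y₂ * doubleThetaIntegral y₁ y₂ := by
    simpa only [tiltReflection_apply] using M2_eq_add_doubleThetaIntegral hx₂ hx
  have hcoeff : (x₂ + κ * x₁) * (x₁ - κ * x₂) / (2 * (1 + κ ^ 2) * τ.im) =
      y₁ * y₂ / (2 * τ.im) := by
    rw [hy₁, hy₂, div_mul_div_comm, ← sq, hsq]
    field_simp
  have hexponent : ((x₂ + κ * x₁) ^ 2 + (x₁ - κ * x₂) ^ 2) / (4 * (1 + κ ^ 2) * τ.im) =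
      (y₁ ^ 2 + y₂ ^ 2) / (4 * τ.im) := by
    rw [hy₁, hy₂, div_pow, div_pow, hsq]
    field_simp
  have him : (τ.im : ℂ) ≠ 0 := ofReal_ne_zero.mpr hτ.ne'
  rw [hM2, hcoeff, hexponent, mul_assoc (-_), mul_assoc (_ : ℂ) (cexp _), cexp_mul_Jint hτ,
    cexp_mul_Jint hτ]
  push_cast
  field_simp
  ring
end

section
/- For all w₁, w₂ in the upper half-plane, Σ_{α∈𝒮} ε(α) Σ_{n∈ℤ²+α} (σ₁n₁+σ₂n₂)·n₂ · e^{(2πiK/σ₁)(σ₁n₁+σ₂n₂)² w₁ + (2πiDK/σ₁) n₂² w₂} = (1/K²) Σ_{B∈𝓑} ε((B₁−σ₂B₂)/(σ₁K), B₂/K) · (Σ_{m≡B₁ (mod σ₁K)} m e^{2πi m² w₁/(σ₁K)}) · (Σ_{m≡B₂ (mod σ₁K)} m e^{2πi D m² w₂/(σ₁K)}), where the sums over m run over all integers in the given residue class. -/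
open Complex

open Classical in
/-- The finite set `𝓑` of pairs `B` with `0 ≤ B₁,B₂ < σ₁K`, `B₁ ≡ σ₁A₁+σ₂A₂+ϱσ₂K (mod σ₁K)`
and `B₂ = A₂+ϱK` for some `A = Kα`, `α ∈ 𝒮`, `ϱ ∈ {0,…,σ₁−1}`. -/
noncomputable def Bset (S : Finset (ℚ × ℚ)) (K : ℕ) (σ₁ σ₂ : ℤ) : Finset (ℤ × ℤ) :=
  (Finset.Ico (0 : ℤ) (σ₁ * K) ×ˢ Finset.Ico (0 : ℤ) (σ₁ * K)).filter
    (fun B => ∃ α ∈ S, ∃ ϱ ∈ Finset.Ico (0 : ℤ) σ₁,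
      (∃ m : ℤ, (B.1 : ℚ) =
        (σ₁ : ℚ) * ((K : ℚ) * α.1) + (σ₂ : ℚ) * ((K : ℚ) * α.2) + (ϱ : ℚ) * σ₂ * K +
          (m : ℚ) * ((σ₁ : ℚ) * K)) ∧
      (B.2 : ℚ) = (K : ℚ) * α.2 + (ϱ : ℚ) * K)

/-- The weight `3/2` theta function `Σ_{m ≡ r (mod M)} m e^{2πiDm²w/M}`. -/
noncomputable def thetaShim (D M r : ℤ) (w : ℂ) : ℂ :=
  ∑' m : ℤ, if M ∣ (m - r) then
    (m : ℂ) * Complex.exp (2 * Real.pi * Complex.I * (D : ℂ) * (m : ℂ) ^ 2 * w / (M : ℂ))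
  else 0

/-!
Put `m = (σ₁K x₁ + σ₂K x₂, K x₂)` for `x = n + α`. As `α` runs over `𝒮` and `n` over `ℤ²`, the
pair `m` runs once over the set `Λ` of those `m ∈ ℤ²` for which
`x = ((m₁ - σ₂m₂) / (σ₁K), m₂ / K)` lies in `𝒮 + ℤ²`, and the summand becomes `K⁻²` times a product
of a function of `m₁` and a function of `m₂`. Since `Λ` and the weight `ε(x)` are invariant under
`σ₁Kℤ²`, sorting the same absolutely convergent sum by residue classes modulo `σ₁K` instead, with
`𝓑` as the set of representatives of `Λ`, gives products of one-dimensional theta series.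
-/

section Summation

variable {β ι κ R : Type*}

lemma sum_mul_tsum_preimage_singleton [Semiring R] [TopologicalSpace R] [IsTopologicalSemiring R]
    [T2Space R] (p : β → ι) (s : Finset ι) (c : ι → R) {F : β → R}
    (hF : ∀ i ∈ s, Summable fun x : p ⁻¹' {i} => F x) :
    ∑ i ∈ s, c i * ∑' x : p ⁻¹' {i}, F x = ∑' x : p ⁻¹' s, c (p x) * F x := by
  have hweight (i : ι) (x : p ⁻¹' {i}) : c i * F x = c (p x) * F x := by rw [show p x = i from x.2]
  have hsum (i : ι) (hi : i ∈ s) : Summable fun x : p ⁻¹' {i} => c (p x) * F x :=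
    ((hF i hi).mul_left (c i)).congr fun x => hweight i x
  have hunion : p ⁻¹' s = ⋃ i ∈ s, p ⁻¹' {i} := (Set.biUnion_preimage_singleton p s).symm
  have hdisj : (s : Set ι).Pairwise (Function.onFun Disjoint fun i => p ⁻¹' {i}) :=
    fun _ _ _ _ hij => (Set.disjoint_singleton.2 hij).preimage p
  rw [hunion, Summable.tsum_finset_bUnion_disjoint (f := fun x => c (p x) * F x) hdisj hsum]
  refine Finset.sum_congr rfl fun i hi => ?_
  rw [← (hF i hi).tsum_mul_left]
  exact tsum_congr (hweight i)

lemma tsum_subtype_mul_tsum_subtype [NormedRing R] [CompleteSpace R] {f : ι → R} {g : κ → R}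
    (hf : Summable fun i => ‖f i‖) (hg : Summable fun k => ‖g k‖) (s : Set ι) (t : Set κ) :
    (∑' i : s, f i) * ∑' k : t, g k = ∑' x : s ×ˢ t, f x.1.1 * g x.1.2 := by
  rw [← (Equiv.Set.prod s t).symm.tsum_eq]
  exact tsum_mul_tsum_of_summable_norm (hf.subtype s) (hg.subtype t)

end Summation

section Lattice

/-- The representative in `[0,1)²` of the class of `x` modulo `ℤ²`. -/
def fractPair (x : ℚ × ℚ) : ℚ × ℚ := (Int.fract x.1, Int.fract x.2)

/-- The representative in `[0,M)²`, for `M > 0`, of the class of `m` modulo `Mℤ²`. -/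
def residuePair (M : ℤ) (m : ℤ × ℤ) : ℤ × ℤ := (m.1 % M, m.2 % M)

/-- The point `x` with `m = (σ₁K x₁ + σ₂K x₂, K x₂)`, that is, the argument `n + α` of the double
series whose linear forms take the value `m`. -/
def gridPoint (K : ℕ) (σ₁ σ₂ : ℤ) (m : ℤ × ℤ) : ℚ × ℚ :=
  (((m.1 : ℚ) - (σ₂ : ℚ) * (m.2 : ℚ)) / ((σ₁ : ℚ) * K), (m.2 : ℚ) / K)

lemma fractPair_eq_iff {x α : ℚ × ℚ} (hα : α.1 ∈ Set.Ico 0 1 ∧ α.2 ∈ Set.Ico 0 1) :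
    fractPair x = α ↔ ∃ n : ℤ × ℤ, x = (n.1 + α.1, n.2 + α.2) := by
  constructor
  · rintro rfl
    exact ⟨(⌊x.1⌋, ⌊x.2⌋), Prod.ext (Int.floor_add_fract _).symm (Int.floor_add_fract _).symm⟩
  · rintro ⟨n, rfl⟩
    simp only [fractPair, Int.fract_intCast_add, Int.fract_eq_self.2 hα.1, Int.fract_eq_self.2 hα.2]

lemma residuePair_idem (M : ℤ) (m : ℤ × ℤ) :
    residuePair M (residuePair M m) = residuePair M m := by
  simp only [residuePair, Int.emod_emod]

lemma residuePair_eq_self_iff {M : ℤ} (hM : 0 < M) {m : ℤ × ℤ} :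
    residuePair M m = m ↔ m ∈ Finset.Ico 0 M ×ˢ Finset.Ico 0 M := by
  have hcoord (a : ℤ) : a % M = a ↔ a ∈ Finset.Ico 0 M := by
    rw [Finset.mem_Ico]
    exact ⟨fun h => h ▸ ⟨Int.emod_nonneg a hM.ne', Int.emod_lt_of_pos a hM⟩,
      fun h => Int.emod_eq_of_lt h.1 h.2⟩
  simp only [residuePair, Prod.ext_iff, hcoord, Finset.mem_product]

variable {K : ℕ} {σ₁ : ℤ}

lemma gridPoint_eq_iff (hK : K ≠ 0) (hσ₁ : σ₁ ≠ 0) {σ₂ : ℤ} {m : ℤ × ℤ} {x : ℚ × ℚ} :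
    gridPoint K σ₁ σ₂ m = x ↔
      (m.1 : ℚ) = σ₁ * (K * x.1) + σ₂ * (K * x.2) ∧ (m.2 : ℚ) = K * x.2 := by
  have hKQ : (K : ℚ) ≠ 0 := by exact_mod_cast hK
  have hσQ : (σ₁ : ℚ) ≠ 0 := by exact_mod_cast hσ₁
  rw [gridPoint, Prod.ext_iff, div_eq_iff (mul_ne_zero hσQ hKQ), div_eq_iff hKQ, mul_comm x.2]
  refine and_congr_left fun h₂ => ?_
  rw [← h₂, sub_eq_iff_eq_add]
  ring_nf

lemma gridPoint_injective (hK : K ≠ 0) (hσ₁ : σ₁ ≠ 0) (σ₂ : ℤ) :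
    Function.Injective (gridPoint K σ₁ σ₂) := by
  intro m m' h
  have hm := (gridPoint_eq_iff hK hσ₁).1 h
  have hm' := (gridPoint_eq_iff hK hσ₁).1 (rfl : gridPoint K σ₁ σ₂ m' = _)
  exact Prod.ext (by exact_mod_cast hm.1.trans hm'.1.symm) (by exact_mod_cast hm.2.trans hm'.2.symm)

lemma exists_gridPoint_eq (hK : K ≠ 0) (hσ₁ : σ₁ ≠ 0) (σ₂ : ℤ) {x : ℚ × ℚ}
    (hx : ∃ z : ℤ × ℤ, (K : ℚ) * x.1 = z.1 ∧ (K : ℚ) * x.2 = z.2) :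
    ∃ m, gridPoint K σ₁ σ₂ m = x := by
  obtain ⟨z, hz₁, hz₂⟩ := hx
  refine ⟨(σ₁ * z.1 + σ₂ * z.2, z.2), (gridPoint_eq_iff hK hσ₁).2 ?_⟩
  rw [hz₁, hz₂]
  exact ⟨by push_cast; rfl, rfl⟩

lemma fractPair_gridPoint_residuePair (hK : K ≠ 0) (hσ₁ : σ₁ ≠ 0) (σ₂ : ℤ) (m : ℤ × ℤ) :
    fractPair (gridPoint K σ₁ σ₂ (residuePair (σ₁ * K) m)) = fractPair (gridPoint K σ₁ σ₂ m) := by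
  have hKQ : (K : ℚ) ≠ 0 := by exact_mod_cast hK
  have hσQ : (σ₁ : ℚ) ≠ 0 := by exact_mod_cast hσ₁
  have hmod (a : ℤ) : ((a % (σ₁ * K) : ℤ) : ℚ) = a - σ₁ * K * (a / (σ₁ * K) : ℤ) := by
    rw [Int.emod_def]
    push_cast
    rfl
  refine Prod.ext (Int.fract_eq_fract.2 ⟨σ₂ * (m.2 / (σ₁ * K)) - m.1 / (σ₁ * K), ?_⟩)
    (Int.fract_eq_fract.2 ⟨-(σ₁ * (m.2 / (σ₁ * K))), ?_⟩) <;>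
  · simp only [gridPoint, residuePair, hmod, Int.cast_sub, Int.cast_mul, Int.cast_neg]
    field_simp
    ring

lemma tsum_translates_eq_tsum_gridPoint {M : Type*} [AddCommMonoid M] [TopologicalSpace M]
    (hK : K ≠ 0) (hσ₁ : σ₁ ≠ 0) (σ₂ : ℤ) {α : ℚ × ℚ}
    (hα : α.1 ∈ Set.Ico 0 1 ∧ α.2 ∈ Set.Ico 0 1)
    (hKα : ∃ z : ℤ × ℤ, (K : ℚ) * α.1 = z.1 ∧ (K : ℚ) * α.2 = z.2) (G : ℚ × ℚ → M) :
    ∑' n : ℤ × ℤ, G (n.1 + α.1, n.2 + α.2) =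
      ∑' m : (fractPair ∘ gridPoint K σ₁ σ₂) ⁻¹' {α}, G (gridPoint K σ₁ σ₂ m) := by
  have hexists (n : ℤ × ℤ) : ∃ m, gridPoint K σ₁ σ₂ m = ((n.1 : ℚ) + α.1, (n.2 : ℚ) + α.2) := by
    obtain ⟨z, hz₁, hz₂⟩ := hKα
    refine exists_gridPoint_eq hK hσ₁ σ₂ ⟨(K * n.1 + z.1, K * n.2 + z.2), ?_, ?_⟩
    · rw [mul_add, hz₁, Int.cast_add, Int.cast_mul, Int.cast_natCast]
    · rw [mul_add, hz₂, Int.cast_add, Int.cast_mul, Int.cast_natCast]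
  choose idx hidx using hexists
  have hinj : Function.Injective idx := by
    intro n n' h
    have hpt := (hidx n).symm.trans ((congrArg _ h).trans (hidx n'))
    simpa [Prod.ext_iff] using hpt
  have hrange : Set.range idx = (fractPair ∘ gridPoint K σ₁ σ₂) ⁻¹' {α} := by
    ext m
    simp only [Set.mem_range, Set.mem_preimage, Function.comp_apply, Set.mem_singleton_iff,
      fractPair_eq_iff hα, ← hidx, (gridPoint_injective hK hσ₁ σ₂).eq_iff, eq_comm]
  rw [← hrange, tsum_range (fun m => G (gridPoint K σ₁ σ₂ m)) hinj]
  simp only [hidx]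

variable {S : Finset (ℚ × ℚ)}

lemma mem_Bset_iff (hS : ∀ α ∈ S, α.1 ∈ Set.Ico (0 : ℚ) 1 ∧ α.2 ∈ Set.Ico (0 : ℚ) 1)
    (hK : 0 < K) (hσ₁ : 0 < σ₁) {σ₂ : ℤ} {B : ℤ × ℤ} :
    B ∈ Bset S K σ₁ σ₂ ↔
      residuePair (σ₁ * K) B = B ∧ fractPair (gridPoint K σ₁ σ₂ B) ∈ S := by
  have hKQ : (0 : ℚ) < K := by exact_mod_cast hK
  have hM : 0 < σ₁ * (K : ℤ) := by positivity
  simp only [residuePair_eq_self_iff hM, Bset, Finset.mem_filter]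
  refine and_congr_right fun hB => ?_
  constructor
  · rintro ⟨α, hα, ϱ, -, ⟨k, h₁⟩, h₂⟩
    have hgrid : gridPoint K σ₁ σ₂ B = ((k : ℚ) + α.1, (ϱ : ℚ) + α.2) :=
      (gridPoint_eq_iff hK.ne' hσ₁.ne').2 ⟨by rw [h₁]; ring, by rw [h₂]; ring⟩
    rwa [(fractPair_eq_iff (hS α hα)).2 ⟨(k, ϱ), hgrid⟩]
  · intro hα
    obtain ⟨n, hn⟩ := (fractPair_eq_iff (hS _ hα)).1 rfl
    generalize fractPair (gridPoint K σ₁ σ₂ B) = α at hα hn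
    obtain ⟨h₁, h₂⟩ := (gridPoint_eq_iff hK.ne' hσ₁.ne').1 hn
    obtain ⟨hα₀, hα₁⟩ := (hS α hα).2
    obtain ⟨hB₀, hB₁⟩ := Finset.mem_Ico.1 (Finset.mem_product.1 hB).2
    have hn₀ : 0 ≤ n.2 := by
      have hpos : (0 : ℚ) ≤ K * (n.2 + α.2) := h₂ ▸ (by exact_mod_cast hB₀)
      have hgt : (-1 : ℚ) < n.2 := by linarith [nonneg_of_mul_nonneg_right hpos hKQ]
      exact Int.add_one_le_iff.2 (by exact_mod_cast hgt : (-1 : ℤ) < n.2)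
    have hnσ : n.2 < σ₁ := by
      have hlt : (K : ℚ) * (n.2 + α.2) < K * σ₁ := by
        rw [← h₂, mul_comm (K : ℚ)]
        exact_mod_cast hB₁
      exact_mod_cast (le_add_of_nonneg_right hα₀).trans_lt (lt_of_mul_lt_mul_left hlt hKQ.le)
    exact ⟨α, hα, n.2, Finset.mem_Ico.2 ⟨hn₀, hnσ⟩, ⟨n.1, by rw [h₁]; ring⟩, by rw [h₂]; ring⟩

lemma preimage_residuePair_Bset
    (hS : ∀ α ∈ S, α.1 ∈ Set.Ico (0 : ℚ) 1 ∧ α.2 ∈ Set.Ico (0 : ℚ) 1)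
    (hK : 0 < K) (hσ₁ : 0 < σ₁) (σ₂ : ℤ) :
    residuePair (σ₁ * K) ⁻¹' Bset S K σ₁ σ₂ =
      (fractPair ∘ gridPoint K σ₁ σ₂) ⁻¹' S := by
  ext m
  simp only [Set.mem_preimage, Function.comp_apply, Finset.mem_coe, mem_Bset_iff hS hK hσ₁,
    residuePair_idem, fractPair_gridPoint_residuePair hK.ne' hσ₁.ne', true_and]

variable {R : Type*}

lemma apply_eq_apply_fractPair {ε : ℚ × ℚ → R}
    (hε : ∀ α ∈ S, ∀ n : ℤ × ℤ, ε (α.1 + n.1, α.2 + n.2) = ε α) {x : ℚ × ℚ}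
    (hx : fractPair x ∈ S) : ε x = ε (fractPair x) := by
  rw [← hε _ hx (⌊x.1⌋, ⌊x.2⌋)]
  simp only [fractPair, Int.fract_add_floor]

theorem sum_mul_tsum_translates_eq_sum_Bset [Ring R] [UniformSpace R] [IsUniformAddGroup R]
    [IsTopologicalRing R] [CompleteSpace R] [T2Space R]
    (hS : ∀ α ∈ S, α.1 ∈ Set.Ico (0 : ℚ) 1 ∧ α.2 ∈ Set.Ico (0 : ℚ) 1) {ε : ℚ × ℚ → R}
    (hε : ∀ α ∈ S, ∀ n : ℤ × ℤ, ε (α.1 + n.1, α.2 + n.2) = ε α) (hK : 0 < K)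
    (hKS : ∀ α ∈ S, ∃ z : ℤ × ℤ, (K : ℚ) * α.1 = z.1 ∧ (K : ℚ) * α.2 = z.2)
    (hσ₁ : 0 < σ₁) (σ₂ : ℤ) {G : ℚ × ℚ → R} (hG : Summable fun m => G (gridPoint K σ₁ σ₂ m)) :
    ∑ α ∈ S, ε α * ∑' n : ℤ × ℤ, G (n.1 + α.1, n.2 + α.2) =
      ∑ B ∈ Bset S K σ₁ σ₂, ε (gridPoint K σ₁ σ₂ B) *
        ∑' m : residuePair (σ₁ * K) ⁻¹' {B}, G (gridPoint K σ₁ σ₂ m) := by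
  have hweight (m : ℤ × ℤ) (hm : fractPair (gridPoint K σ₁ σ₂ m) ∈ S) :
      ε (fractPair (gridPoint K σ₁ σ₂ m)) = ε (gridPoint K σ₁ σ₂ (residuePair (σ₁ * K) m)) := by
    rw [← fractPair_gridPoint_residuePair hK.ne' hσ₁.ne' σ₂ m] at hm ⊢
    exact (apply_eq_apply_fractPair hε hm).symm
  calc
    _ = ∑ α ∈ S, ε α * ∑' m : (fractPair ∘ gridPoint K σ₁ σ₂) ⁻¹' {α}, G (gridPoint K σ₁ σ₂ m) :=
      Finset.sum_congr rfl fun α hα => by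
        rw [tsum_translates_eq_tsum_gridPoint hK.ne' hσ₁.ne' σ₂ (hS α hα) (hKS α hα)]
    _ = ∑' m : (fractPair ∘ gridPoint K σ₁ σ₂) ⁻¹' S,
          ε (fractPair (gridPoint K σ₁ σ₂ m)) * G (gridPoint K σ₁ σ₂ m) :=
      sum_mul_tsum_preimage_singleton (F := fun m => G (gridPoint K σ₁ σ₂ m)) _ S ε
        fun _ _ => hG.subtype _
    _ = ∑' m : residuePair (σ₁ * K) ⁻¹' Bset S K σ₁ σ₂,
          ε (gridPoint K σ₁ σ₂ (residuePair (σ₁ * K) m)) * G (gridPoint K σ₁ σ₂ m) := by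
      rw [preimage_residuePair_Bset hS hK hσ₁ σ₂]
      exact tsum_congr fun m => by rw [hweight m m.2]
    _ = _ :=
      (sum_mul_tsum_preimage_singleton (F := fun m => G (gridPoint K σ₁ σ₂ m)) _ _
        (fun B => ε (gridPoint K σ₁ σ₂ B)) fun _ _ => hG.subtype _).symm

end Lattice

section Theta

/-- The summand `m e^{2πiDm²w/M}` of `thetaShim`. -/
noncomputable def thetaTerm (D M : ℤ) (w : ℂ) (m : ℤ) : ℂ :=
  (m : ℂ) * cexp (2 * Real.pi * I * (D : ℂ) * (m : ℂ) ^ 2 * w / (M : ℂ))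

/-- The summand of the double theta series, as a function of the point `x = n + α`. -/
noncomputable def doubleThetaTerm (K : ℕ) (σ₁ σ₂ D : ℤ) (w₁ w₂ : ℂ) (x : ℚ × ℚ) : ℂ :=
  (((σ₁ * x.1 + σ₂ * x.2) * x.2 : ℚ) : ℂ) *
    cexp (2 * Real.pi * I * (K : ℂ) / (σ₁ : ℂ) * (((σ₁ * x.1 + σ₂ * x.2) ^ 2 : ℚ) : ℂ) * w₁ +
      2 * Real.pi * I * (D : ℂ) * (K : ℂ) / (σ₁ : ℂ) * ((x.2 ^ 2 : ℚ) : ℂ) * w₂)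

lemma summable_int_mul_cexp_sq {τ : ℂ} (hτ : 0 < τ.im) :
    Summable fun m : ℤ => (m : ℂ) * cexp (Real.pi * I * (m : ℂ) ^ 2 * τ) := by
  refine (summable_mul_left_iff two_pi_I_ne_zero).1
    (((summable_jacobiTheta₂'_term_iff 0 τ).2 hτ).congr fun m => ?_)
  rw [jacobiTheta₂'_term, jacobiTheta₂_term, mul_zero, zero_add, mul_assoc]

lemma summable_thetaTerm {D M : ℤ} (hD : 0 < D) (hM : 0 < M) {w : ℂ} (hw : 0 < w.im) :
    Summable (thetaTerm D M w) := by
  have hτ : 0 < (((2 * D / M : ℝ) : ℂ) * w).im := by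
    rw [im_ofReal_mul]
    positivity
  refine (summable_int_mul_cexp_sq hτ).congr fun m => ?_
  rw [thetaTerm]
  congr 2
  push_cast
  ring

lemma thetaShim_eq_tsum_emod (D M r : ℤ) (w : ℂ) :
    thetaShim D M r w = ∑' m : {m : ℤ | m % M = r % M}, thetaTerm D M w m := by
  rw [tsum_subtype, thetaShim]
  refine tsum_congr fun m => ?_
  simp only [Set.indicator, Set.mem_ofPred_eq, Int.emod_eq_emod_iff_emod_sub_eq_zero,
    Int.dvd_iff_emod_eq_zero, thetaTerm]

lemma thetaShim_mul_thetaShim {D₁ D₂ M : ℤ} (hD₁ : 0 < D₁) (hD₂ : 0 < D₂) (hM : 0 < M)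
    {w₁ w₂ : ℂ} (hw₁ : 0 < w₁.im) (hw₂ : 0 < w₂.im) {B : ℤ × ℤ} (hB : residuePair M B = B) :
    thetaShim D₁ M B.1 w₁ * thetaShim D₂ M B.2 w₂ =
      ∑' m : residuePair M ⁻¹' {B}, thetaTerm D₁ M w₁ m.1.1 * thetaTerm D₂ M w₂ m.1.2 := by
  have hclass : {m : ℤ | m % M = B.1 % M} ×ˢ {m : ℤ | m % M = B.2 % M} =
      residuePair M ⁻¹' {B} := by
    ext m
    rw [Set.mem_preimage, ← hB, Set.mem_singleton_iff, Prod.ext_iff]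
    simp [residuePair]
  rw [thetaShim_eq_tsum_emod, thetaShim_eq_tsum_emod, ← hclass]
  exact tsum_subtype_mul_tsum_subtype (summable_thetaTerm hD₁ hM hw₁).norm
    (summable_thetaTerm hD₂ hM hw₂).norm _ _

lemma doubleThetaTerm_gridPoint {K : ℕ} (hK : K ≠ 0) {σ₁ : ℤ} (hσ₁ : σ₁ ≠ 0) (σ₂ D : ℤ)
    (w₁ w₂ : ℂ) (m : ℤ × ℤ) :
    doubleThetaTerm K σ₁ σ₂ D w₁ w₂ (gridPoint K σ₁ σ₂ m) =
      1 / (K : ℂ) ^ 2 * (thetaTerm 1 (σ₁ * K) w₁ m.1 * thetaTerm D (σ₁ * K) w₂ m.2) := by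
  have hKC : (K : ℂ) ≠ 0 := by exact_mod_cast hK
  have hσC : (σ₁ : ℂ) ≠ 0 := by exact_mod_cast hσ₁
  obtain ⟨h₁, h₂⟩ := (gridPoint_eq_iff hK hσ₁).1 (rfl : gridPoint K σ₁ σ₂ m = _)
  generalize gridPoint K σ₁ σ₂ m = x at h₁ h₂
  have h₁C : (m.1 : ℂ) = σ₁ * (K * x.1) + σ₂ * (K * x.2) := by exact_mod_cast congrArg Rat.cast h₁
  have h₂C : (m.2 : ℂ) = K * x.2 := by exact_mod_cast congrArg Rat.cast h₂
  rw [doubleThetaTerm, thetaTerm, thetaTerm, mul_mul_mul_comm, ← exp_add, ← mul_assoc, h₁C, h₂C]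
  push_cast
  congr 1
  · field_simp
  · congr 1
    field_simp

theorem theta_decomposition_general
    (S : Finset (ℚ × ℚ)) (hS : ∀ α ∈ S, α.1 ∈ Set.Ico (0 : ℚ) 1 ∧ α.2 ∈ Set.Ico (0 : ℚ) 1)
    (ε : ℚ × ℚ → ℂ) (hε : ∀ α ∈ S, ∀ n : ℤ × ℤ, ε (α.1 + n.1, α.2 + n.2) = ε α)
    (K : ℕ) (hK : 0 < K)
    (hKS : ∀ α ∈ S, ∃ z : ℤ × ℤ, (K : ℚ) * α.1 = z.1 ∧ (K : ℚ) * α.2 = z.2)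
    (σ₁ σ₂ D : ℤ) (hσ₁ : 0 < σ₁) (hD : 0 < D)
    (w₁ w₂ : ℂ) (hw₁ : 0 < w₁.im) (hw₂ : 0 < w₂.im) :
    ∑ α ∈ S, ε α * ∑' n : ℤ × ℤ, doubleThetaTerm K σ₁ σ₂ D w₁ w₂ (n.1 + α.1, n.2 + α.2) =
      1 / (K : ℂ) ^ 2 * ∑ B ∈ Bset S K σ₁ σ₂, ε (gridPoint K σ₁ σ₂ B) *
        (thetaShim 1 (σ₁ * K) B.1 w₁ * thetaShim D (σ₁ * K) B.2 w₂) := by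
  have hM : 0 < σ₁ * (K : ℤ) := by positivity
  have hterm := doubleThetaTerm_gridPoint hK.ne' hσ₁.ne' σ₂ D w₁ w₂
  have hsum : Summable fun m => doubleThetaTerm K σ₁ σ₂ D w₁ w₂ (gridPoint K σ₁ σ₂ m) := by
    simp only [hterm]
    exact (summable_mul_of_summable_norm (summable_thetaTerm one_pos hM hw₁).norm
      (summable_thetaTerm hD hM hw₂).norm).mul_left _
  rw [sum_mul_tsum_translates_eq_sum_Bset hS hε hK hKS hσ₁ σ₂ hsum, Finset.mul_sum]
  refine Finset.sum_congr rfl fun B hB => ?_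
  rw [thetaShim_mul_thetaShim one_pos hD hM hw₁ hw₂ ((mem_Bset_iff hS hK hσ₁).1 hB).1]
  simp only [hterm, tsum_mul_left]
  ring

end Theta

theorem theta_decomposition
    (S : Finset (ℚ × ℚ))
    (hS01 : ∀ α ∈ S, α.1 ∈ Set.Ioo (0 : ℚ) 1 ∧ α.2 ∈ Set.Ioo (0 : ℚ) 1)
    (hSsym : ∀ α ∈ S, (1 - α.1, 1 - α.2) ∈ S ∧ (1 - α.1, α.2) ∈ S ∧ (α.1, 1 - α.2) ∈ S)
    (ε : ℚ × ℚ → ℝ)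
    (hε : ∀ α ∈ S, ε (1 - α.1, 1 - α.2) = ε α ∧ ε (1 - α.1, α.2) = ε α)
    (hεper : ∀ (α : ℚ × ℚ) (n : ℤ × ℤ), ε (α.1 + n.1, α.2 + n.2) = ε α)
    (K : ℕ) (hK : 0 < K)
    (hKS : ∀ α ∈ S, ∃ z : ℤ × ℤ, (K : ℚ) * α.1 = z.1 ∧ (K : ℚ) * α.2 = z.2)
    (σ₁ σ₂ σ₃ : ℤ) (hσ₁ : 0 < σ₁) (hD : 0 < σ₁ * σ₃ - σ₂ ^ 2)
    (w₁ w₂ : ℂ) (hw₁ : 0 < w₁.im) (hw₂ : 0 < w₂.im) :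
    (∑ α ∈ S, (ε α : ℂ) *
      ∑' n : ℤ × ℤ,
        (((σ₁ * ((n.1 : ℚ) + α.1) + σ₂ * ((n.2 : ℚ) + α.2)) * ((n.2 : ℚ) + α.2) : ℚ) : ℂ) *
          Complex.exp (2 * Real.pi * Complex.I * (K : ℂ) / (σ₁ : ℂ) *
              (((σ₁ * ((n.1 : ℚ) + α.1) + σ₂ * ((n.2 : ℚ) + α.2)) ^ 2 : ℚ) : ℂ) * w₁ +
            2 * Real.pi * Complex.I * ((σ₁ * σ₃ - σ₂ ^ 2 : ℤ) : ℂ) * (K : ℂ) / (σ₁ : ℂ) *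
              ((((n.2 : ℚ) + α.2) ^ 2 : ℚ) : ℂ) * w₂)) =
      (1 / (K : ℂ) ^ 2) * ∑ B ∈ Bset S K σ₁ σ₂,
        (ε (((B.1 : ℚ) - (σ₂ : ℚ) * (B.2 : ℚ)) / ((σ₁ : ℚ) * K), (B.2 : ℚ) / K) : ℂ) *
          (thetaShim 1 (σ₁ * K) B.1 w₁ * thetaShim (σ₁ * σ₃ - σ₂ ^ 2) (σ₁ * K) B.2 w₂) :=
  theta_decomposition_general S
    (fun α hα => (hS01 α hα).imp (Set.Ioo_subset_Ico_self ·) (Set.Ioo_subset_Ico_self ·))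
    (fun α => (ε α : ℂ)) (fun α _ n => congrArg _ (hεper α n)) K hK hKS σ₁ σ₂ _ hσ₁ hD w₁ w₂ hw₁ hw₂
end

section
/- Let N and D be positive integers, h ∈ ℤ, and define f(τ) := Σ_{m≡h (mod N)} m e^{2πi D τ m²/N} for τ in the upper half-plane. Then for every γ = (a b; c d) ∈ SL₂(ℤ) with d > 0, a ≡ d ≡ 1 (mod 8ND) and b ≡ c ≡ 0 (mod 8ND), and every τ in the upper half-plane, (c/d)³ ε_d³ (cτ+d)^{−3/2} f((aτ+b)/(cτ+d)) = f(τ); that is, f is invariant under the weight-3/2 slash action of γ. -/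
open Complex

/-- `f(τ) = Σ_{m ≡ h (mod N)} m e^{2πiDτm²/N}`. -/
noncomputable def shimuraTheta (N D : ℕ) (h : ℤ) (τ : ℂ) : ℂ :=
  ∑' m : ℤ, if (N : ℤ) ∣ (m - h) then
    (m : ℂ) * Complex.exp (2 * Real.pi * Complex.I * (D : ℂ) * τ * (m : ℂ) ^ 2 / (N : ℂ))
  else 0

/-!
The series `f` is, up to the factor `2πi`, the `z`-derivative at `0` of a two-variable theta series
with `m` in a fixed residue class modulo `N`, which the substitution `m = h + N n` expresses through
Jacobi's `θ₂(z, 2DNτ)`. An element `(a, b; c, d)` of `Γ₀(4ND)` acts on `σ = 2DNτ` as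
`(a, 2DNb; c / 2DN, d)`, whose off-diagonal entries are even, so it suffices to know how `θ₂`
transforms under matrices with `b` and `c` even; differentiating that law at `z = 0` gives weight
`3/2`.

The law for `θ₂` is proved by Euclidean descent on `(c, d)` with `d > 0`. Right multiplication by
`(1, 2k; 0, 1)` moves `d` by multiples of `2c`, right multiplication by `(1, 0; 2k, 1)` moves `c` by
multiples of `2d`, and along the descent the multiplier `(2c/d) ε_d⁻¹` follows quadratic
reciprocity. If `|c| < d < 2|c|`, the shift of `d` makes it negative, and passing to the opposite
matrix costs the factor `±i` by which `√(-x)` and `√x` differ. The second kind of shift is the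
conjugate of the first by `σ ↦ -1/σ`.
-/

lemma div_cpow_of_re_pos {x y : ℂ} (hx : 0 < x.re) (hy : 0 < y.re) (r : ℂ) :
    (x / y) ^ r = x ^ r / y ^ r := by
  have hx0 : x ≠ 0 := by rintro rfl; simp at hx
  have hy0 : y ≠ 0 := by rintro rfl; simp at hy
  have hargx := abs_lt.mp (abs_arg_lt_pi_div_two_iff.mpr (.inl hx))
  have hargy := abs_lt.mp (abs_arg_lt_pi_div_two_iff.mpr (.inl hy))
  have hy_pi : y.arg ≠ Real.pi := by linarith [Real.pi_pos]
  have hmul : log (x * y⁻¹) = log x + log y⁻¹ := by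
    refine log_mul hx0 (inv_ne_zero hy0) ?_
    rw [arg_inv, if_neg hy_pi]
    constructor <;> linarith
  have hlog : log (x / y) = log x - log y := by
    rw [div_eq_mul_inv, hmul, log_inv y hy_pi, sub_eq_add_neg]
  rw [cpow_def_of_ne_zero (div_ne_zero hx0 hy0), hlog, sub_mul, exp_sub,
    cpow_def_of_ne_zero hx0, cpow_def_of_ne_zero hy0]

lemma neg_cpow_one_half {x : ℂ} (s : ℤˣ) (hx : 0 < (s : ℤ) * x.im) :
    (-x) ^ (1 / 2 : ℂ) = -(s : ℤ) * I * x ^ (1 / 2 : ℂ) := by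
  have hx0 : x ≠ 0 := by rintro rfl; simp at hx
  have hexp : cexp (Real.pi / 2 * I) = I := exp_pi_div_two_mul_I
  rw [cpow_def_of_ne_zero (neg_ne_zero.mpr hx0), cpow_def_of_ne_zero hx0]
  rcases Int.units_eq_one_or s with rfl | rfl
  · have hlog : log (-x) = log x - Real.pi * I := by
      rw [log, log, norm_neg, arg_neg_eq_arg_sub_pi_of_im_pos (by simpa using hx)]
      push_cast; ring
    rw [hlog, show (log x - Real.pi * I) * (1 / 2) = log x * (1 / 2) - Real.pi / 2 * I by ring,
      exp_sub, hexp, div_I]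
    push_cast; ring
  · have hlog : log (-x) = log x + Real.pi * I := by
      rw [log, log, norm_neg, arg_neg_eq_arg_add_pi_of_im_neg (by simpa using hx)]
      push_cast; ring
    rw [hlog, show (log x + Real.pi * I) * (1 / 2) = log x * (1 / 2) + Real.pi / 2 * I by ring,
      exp_add, hexp]
    push_cast; ring

lemma cpow_neg_three_half_mul {j : ℂ} (hj : j ≠ 0) :
    j ^ (-(3 : ℂ) / 2) * (j ^ (1 / 2 : ℂ) * j) = 1 := by
  nth_rewrite 3 [← cpow_one j]
  rw [← cpow_add _ _ hj, ← cpow_add _ _ hj]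
  norm_num

lemma moebius_denom_ne_zero {a b c d : ℤ} (hdet : a * d - b * c ≠ 0) {σ : ℂ}
    (hσ : 0 < σ.im) : (c * σ + d : ℂ) ≠ 0 := by
  have hcd : ![(c : ℝ), d] ≠ 0 := by
    intro hzero
    obtain ⟨rfl, rfl⟩ : c = 0 ∧ d = 0 := by simpa using hzero
    simp at hdet
  simpa using UpperHalfPlane.linear_ne_zero_of_im hσ.ne' hcd

lemma im_moebius_pos {a b c d : ℤ} (hdet : 0 < a * d - b * c) {σ : ℂ} (hσ : 0 < σ.im) :
    0 < ((a * σ + b : ℂ) / (c * σ + d)).im := by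
  have hdet' : (0 : ℝ) < a * d - b * c := by exact_mod_cast hdet
  rw [div_im, ← sub_div]
  refine div_pos ?_ (normSq_pos.mpr (moebius_denom_ne_zero hdet.ne' hσ))
  have : (0 : ℝ) < (a * d - b * c) * σ.im := mul_pos hdet' hσ
  simp only [add_im, add_re, mul_im, mul_re, intCast_im, intCast_re, zero_mul, sub_zero, add_zero]
  linarith

lemma jacobiTheta₂_add_int_left (z σ : ℂ) (n : ℤ) :
    jacobiTheta₂ (z + n) σ = jacobiTheta₂ z σ := by
  have hper : Function.Periodic (jacobiTheta₂ · σ) 1 := (jacobiTheta₂_add_left · σ)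
  simpa using hper.int_mul n z

lemma jacobiTheta₂_add_two_mul_int_right (z σ : ℂ) (n : ℤ) :
    jacobiTheta₂ z (σ + 2 * n) = jacobiTheta₂ z σ := by
  have hper : Function.Periodic (jacobiTheta₂ z) 2 := jacobiTheta₂_add_right z
  simpa [mul_comm] using hper.int_mul n σ

/-- The transformation law of `θ₂` under `(a, b; c, d)` with multiplier `κ`. The constant `u` fixes
the branch of the square root: `u = 1` is the usual law, and `u = -I` is the form that the law takes
after right multiplication by `σ ↦ -1/σ`. For `d > 0` the latter involves the square root of
`-I (d σ - c)`, which has positive real part, so passing between the two meets no branch cut. -/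
def ThetaTransforms (u κ : ℂ) (a b c d : ℤ) : Prop :=
  ∀ z σ : ℂ, 0 < σ.im →
    jacobiTheta₂ (z / (c * σ + d)) ((a * σ + b) / (c * σ + d)) =
      κ * (u * (c * σ + d)) ^ (1 / 2 : ℂ) * cexp (Real.pi * I * c * z ^ 2 / (c * σ + d)) *
        jacobiTheta₂ z σ

namespace ThetaTransforms

variable {u κ : ℂ} {a b c d : ℤ}

lemma right_mul_T_sq_zpow (k : ℤ) (H : ThetaTransforms u κ a b c d) :
    ThetaTransforms u κ a (b + 2 * k * a) c (d + 2 * k * c) := by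
  intro z σ hσ
  have H' := H z (σ + 2 * k) (by simpa using hσ)
  rw [jacobiTheta₂_add_two_mul_int_right,
    show (c * (σ + 2 * k) + d : ℂ) = c * σ + (d + 2 * k * c : ℤ) by push_cast; ring,
    show (a * (σ + 2 * k) + b : ℂ) = a * σ + (b + 2 * k * a : ℤ) by push_cast; ring] at H'
  exact H'

lemma neg_of_sign (s : ℤˣ) (hc : 0 < s * c) (H : ThetaTransforms 1 κ (-a) (-b) (-c) (-d)) :
    ThetaTransforms 1 (-s * I * κ) a b c d := by
  intro z σ hσ
  have him : 0 < (s : ℤ) * (c * σ + d : ℂ).im := by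
    have : (0 : ℝ) < s * c := by exact_mod_cast hc
    simpa [mul_assoc] using mul_pos this hσ
  have hsqrt := neg_cpow_one_half s him
  have H' := H (-z) σ hσ
  simp only [Int.cast_neg, neg_mul, ← neg_add, neg_div_neg_eq, mul_neg, neg_sq,
    jacobiTheta₂_neg_left, one_mul] at H' ⊢
  rw [H', hsqrt]
  ring

end ThetaTransforms

lemma im_neg_one_div_pos {σ : ℂ} (hσ : 0 < σ.im) : 0 < (-1 / σ).im := by
  have hσ0 : σ ≠ 0 := by rintro rfl; simp at hσ
  simpa [neg_div, div_eq_mul_inv] using div_pos hσ (normSq_pos.mpr hσ0)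

lemma automorphy_factor_mul_jacobiTheta₂_S {c d : ℤ} (hd : 0 < d) (z : ℂ) {σ : ℂ}
    (hσ : 0 < σ.im) :
    (c * (-1 / σ) + d : ℂ) ^ (1 / 2 : ℂ) *
        cexp (Real.pi * I * c * (z / σ) ^ 2 / (c * (-1 / σ) + d)) *
        jacobiTheta₂ (z / σ) (-1 / σ) =
      (-I * (d * σ + (-c : ℤ))) ^ (1 / 2 : ℂ) *
        cexp (Real.pi * I * d * z ^ 2 / (d * σ + (-c : ℤ))) * jacobiTheta₂ z σ := by
  have hσ0 : σ ≠ 0 := by rintro rfl; simp at hσ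
  have hj0 : (c * (-1 / σ) + d : ℂ) ≠ 0 :=
    moebius_denom_ne_zero (a := 1) (b := 0) (by simpa using hd.ne') (im_neg_one_div_pos hσ)
  have hre : 0 < (-I * (d * σ + (-c : ℤ))).re := by simpa [hσ] using hd
  have hre' : 0 < (-I * σ).re := by simpa using hσ
  have hroot0 : (-I * σ) ^ (1 / 2 : ℂ) ≠ 0 := by simp [cpow_eq_zero_iff, hσ0]
  have hquot : (-I * (d * σ + (-c : ℤ))) / (-I * σ) = c * (-1 / σ) + d := by
    push_cast; field_simp; ring
  have hsqrt := div_cpow_of_re_pos hre hre' (1 / 2)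
  have hexp : cexp (Real.pi * I * d * z ^ 2 / (d * σ + (-c : ℤ))) *
      cexp (-Real.pi * I * z ^ 2 / σ) =
      cexp (Real.pi * I * c * (z / σ) ^ 2 / (c * (-1 / σ) + d)) := by
    have hden : (d * σ + (-c : ℤ) : ℂ) = σ * (c * (-1 / σ) + d) := by
      push_cast; field_simp; ring
    rw [← exp_add, hden]
    generalize hj : (c * (-1 / σ) + d : ℂ) = j at hj0
    have hc : (c : ℂ) = (d - j) * σ := by rw [← hj]; field_simp; ring
    congr 1
    rw [hc]
    field_simp
    ring
  rw [hquot] at hsqrt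
  rw [jacobiTheta₂_functional_equation z σ, hsqrt, ← hexp]
  field_simp [hroot0]

namespace ThetaTransforms

variable {κ : ℂ} {a b c d : ℤ}

lemma right_mul_S (hd : 0 < d) (H : ThetaTransforms 1 κ a b c d) :
    ThetaTransforms (-I) κ b (-a) d (-c) := by
  intro z σ hσ
  have hσ0 : σ ≠ 0 := by rintro rfl; simp at hσ
  have hden : (c * (-1 / σ) + d : ℂ) = (d * σ + (-c : ℤ)) / σ := by push_cast; field_simp; ring
  have hnum : (a * (-1 / σ) + b : ℂ) = (b * σ + (-a : ℤ)) / σ := by push_cast; field_simp; ring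
  have H' := H (z / σ) (-1 / σ) (im_neg_one_div_pos hσ)
  rw [one_mul, mul_assoc κ, mul_assoc κ, automorphy_factor_mul_jacobiTheta₂_S hd z hσ,
    hden, hnum, div_div_div_cancel_right₀ hσ0, div_div_div_cancel_right₀ hσ0] at H'
  rw [H', mul_assoc κ, mul_assoc κ]

lemma of_right_mul_S (hd : 0 < d) (H : ThetaTransforms (-I) κ b (-a) d (-c)) :
    ThetaTransforms 1 κ a b c d := by
  intro z σ hσ
  have hσ0 : σ ≠ 0 := by rintro rfl; simp at hσ
  have hσ' := im_neg_one_div_pos hσ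
  have hden : (d * (-1 / σ) + (-c : ℤ) : ℂ) = -(c * σ + d) / σ := by push_cast; field_simp; ring
  have hnum : (b * (-1 / σ) + (-a : ℤ) : ℂ) = -(a * σ + b) / σ := by push_cast; field_simp; ring
  have hz : -z / σ / (-1 / σ) = z := by field_simp
  have hσσ : -1 / (-1 / σ) = σ := by field_simp
  have H' := H (-z / σ) (-1 / σ) hσ'
  rw [mul_assoc κ, mul_assoc κ, ← automorphy_factor_mul_jacobiTheta₂_S hd _ hσ', hz, hσσ,
    hden, hnum, div_div_div_cancel_right₀ hσ0, div_div_div_cancel_right₀ hσ0,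
    neg_div_neg_eq, neg_div_neg_eq] at H'
  rw [H', one_mul, mul_assoc κ, mul_assoc κ]

lemma right_mul_U_sq_zpow (k : ℤ) (hd : 0 < d) (H : ThetaTransforms 1 κ a b c d) :
    ThetaTransforms 1 κ (a + 2 * k * b) b (c + 2 * k * d) d := by
  refine of_right_mul_S hd ?_
  convert (H.right_mul_S hd).right_mul_T_sq_zpow (-k) using 1 <;> ring

end ThetaTransforms

/-- The factor `ε_d` of the half-integral weight slash action, for odd `d`. -/
noncomputable def thetaEpsilon (d : ℕ) : ℂ := if d % 4 = 1 then 1 else I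

/-- The multiplier `(2c/d) ε_d⁻¹` in the transformation law of `θ₂` under a matrix with lower row
`(c, d)`, for `c` even and `d` odd. -/
noncomputable def thetaMultiplier (c : ℤ) (d : ℕ) : ℂ := jacobiSym (2 * c) d / thetaEpsilon d

lemma jacobiSym_neg_one_eq_ite {d : ℕ} (hd : Odd d) :
    jacobiSym (-1) d = if d % 4 = 1 then 1 else -1 := by
  rw [jacobiSym.at_neg_one hd]
  rcases Nat.odd_mod_four_iff.mp (Nat.odd_iff.mp hd) with h | h
  · rw [ZMod.χ₄_nat_one_mod_four h, if_pos h]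
  · rw [ZMod.χ₄_nat_three_mod_four h, if_neg (by omega)]

lemma thetaEpsilon_sq {d : ℕ} (hd : Odd d) : thetaEpsilon d ^ 2 = jacobiSym (-1) d := by
  rw [jacobiSym_neg_one_eq_ite hd, thetaEpsilon]
  split_ifs <;> simp

lemma thetaEpsilon_ne_zero (d : ℕ) : thetaEpsilon d ≠ 0 := by
  rw [thetaEpsilon]; split_ifs <;> simp

lemma jacobiSym_congr_right {a : ℤ} {d e : ℕ} (hd : Odd d) (he : Odd e)
    (h : 4 * a ∣ (d : ℤ) - e) : jacobiSym a d = jacobiSym a e := by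
  have hmod : d ≡ e [MOD 4 * a.natAbs] := by
    refine (Nat.modEq_iff_dvd.mpr ?_).symm
    rwa [Nat.cast_mul, Int.natCast_natAbs, Nat.cast_ofNat, ← abs_of_pos (four_pos : (0 : ℤ) < 4),
      ← abs_mul, abs_dvd]
  rw [jacobiSym.mod_right a hd, jacobiSym.mod_right a he, hmod]

lemma jacobiSym_eq_one_of_four_mul_dvd_sub_one {a : ℤ} {d : ℕ} (h : 4 * a ∣ (d : ℤ) - 1) :
    jacobiSym a d = 1 := by
  have hd : Odd d := by
    have := (Dvd.intro a rfl : (4 : ℤ) ∣ 4 * a).trans h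
    rw [Nat.odd_iff]
    omega
  rw [jacobiSym_congr_right hd odd_one (by simpa using h), jacobiSym.one_right]

lemma jacobiSym_comm_of_four_dvd_add {d e : ℕ} (hd : Odd d) (h : 4 ∣ d + e) :
    jacobiSym e d = jacobiSym d e := by
  have he : Odd e := by rw [Nat.odd_iff] at *; omega
  rcases Nat.odd_mod_four_iff.mp (Nat.odd_iff.mp hd) with hd1 | hd3
  · exact (jacobiSym.quadratic_reciprocity_one_mod_four hd1 he).symm
  · exact jacobiSym.quadratic_reciprocity_one_mod_four (by omega) hd

lemma thetaMultiplier_congr_right {c : ℤ} {d e : ℕ} (hc : Even c) (hd : Odd d) (he : Odd e)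
    (h : 2 * c ∣ (d : ℤ) - e) : thetaMultiplier c d = thetaMultiplier c e := by
  obtain ⟨x, rfl⟩ := hc.two_dvd
  have h4 : d % 4 = e % 4 := by
    have := (Dvd.intro (x) (by ring) : (4 : ℤ) ∣ 2 * (2 * x)).trans h
    omega
  have hjac {n : ℕ} (hn : Odd n) : jacobiSym (2 * (2 * x)) n = jacobiSym x n := by
    rw [← mul_assoc, jacobiSym.mul_left, show (2 * 2 : ℤ) = 4 by rfl, jacobiSym.at_four hn, one_mul]
  rw [thetaMultiplier, thetaMultiplier, thetaEpsilon, thetaEpsilon, hjac hd, hjac he, h4,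
    jacobiSym_congr_right hd he (by convert h using 1; ring)]

lemma thetaMultiplier_congr_left {c c' : ℤ} {d : ℕ} (h : c ≡ c' [ZMOD d]) :
    thetaMultiplier c d = thetaMultiplier c' d := by
  rw [thetaMultiplier, thetaMultiplier, jacobiSym.mod_left' (h.mul_left 2)]

lemma jacobiSym_unit_div_thetaEpsilon {d e : ℕ} (s : ℤˣ) (hd : Odd d) (h : 4 ∣ d + e) :
    (jacobiSym s d : ℂ) / thetaEpsilon d =
      -(s : ℤ) * I * (jacobiSym (-s) e / thetaEpsilon e) := by
  have he : Odd e := by rw [Nat.odd_iff] at *; omega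
  have hcases : d % 4 = 1 ∧ e % 4 = 3 ∨ d % 4 = 3 ∧ e % 4 = 1 := by
    rw [Nat.odd_iff] at hd; omega
  rw [thetaEpsilon, thetaEpsilon]
  rcases Int.units_eq_one_or s with rfl | rfl <;> rcases hcases with ⟨hd4, he4⟩ | ⟨hd4, he4⟩ <;>
    simp [hd4, he4, jacobiSym_neg_one_eq_ite, hd, he]

lemma thetaMultiplier_eq_neg {c : ℤ} {d e : ℕ} (s : ℤˣ) (hc : Even c) (hd : Odd d)
    (h : (d : ℤ) + e = 2 * (s * c)) :
    thetaMultiplier c d = -(s : ℤ) * I * thetaMultiplier (-c) e := by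
  have h4 : 4 ∣ d + e := by
    obtain ⟨x, rfl⟩ := hc.two_dvd
    have : (4 : ℤ) ∣ d + e := ⟨s * x, by rw [h]; ring⟩
    exact_mod_cast this
  have hs : (s * s : ℤ) = 1 := Int.units_coe_mul_self s
  have hc_eq : 2 * c = s * (d + e) := by rw [h]; linear_combination (-2 * c) * hs
  have hd_add : jacobiSym (d + e) d = jacobiSym e d := jacobiSym.mod_left' (by simp)
  have he_add : jacobiSym (d + e) e = jacobiSym d e := jacobiSym.mod_left' (by simp)
  have hunit := jacobiSym_unit_div_thetaEpsilon s hd h4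
  rw [thetaMultiplier, thetaMultiplier, mul_neg, hc_eq, ← neg_mul, jacobiSym.mul_left,
    jacobiSym.mul_left, hd_add, he_add, jacobiSym_comm_of_four_dvd_add hd h4]
  push_cast
  linear_combination (jacobiSym d e : ℂ) * hunit

lemma jacobiSym_pow_three_mul_thetaMultiplier {m k : ℤ} {d : ℕ} (hd : Odd d)
    (hcop : IsCoprime (m * (4 * k)) d) :
    (jacobiSym (m * (4 * k)) d : ℂ) ^ 3 * thetaEpsilon d ^ 3 * thetaMultiplier (2 * k) d =
      jacobiSym (-m) d := by
  have hsq : (jacobiSym (m * (4 * k)) d : ℂ) ^ 2 = 1 := by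
    exact_mod_cast jacobiSym.sq_one (Int.isCoprime_iff_gcd_eq_one.mp hcop)
  have hsq' : (jacobiSym (4 * k) d : ℂ) ^ 2 = 1 := by
    exact_mod_cast jacobiSym.sq_one (Int.isCoprime_iff_gcd_eq_one.mp hcop.of_mul_left_right)
  calc
    _ = (jacobiSym (m * (4 * k)) d : ℂ) ^ 2 * jacobiSym m d * jacobiSym (4 * k) d ^ 2 *
        thetaEpsilon d ^ 2 := by
      rw [thetaMultiplier, ← mul_assoc 2 2 k, show (2 * 2 : ℤ) = 4 by rfl,
        jacobiSym.mul_left m]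
      field_simp [thetaEpsilon_ne_zero d]
      push_cast
      ring
    _ = jacobiSym (-m) d := by
      rw [hsq, hsq', thetaEpsilon_sq hd, neg_eq_neg_one_mul m, jacobiSym.mul_left (-1)]
      push_cast
      ring

lemma odd_of_det_eq_one {a b c d : ℤ} (hdet : a * d - b * c = 1) (hc : Even c) : Odd d := by
  have hodd : Odd (a * d - b * c) := hdet ▸ odd_one
  exact (Int.odd_mul.mp ((Int.odd_sub.mp hodd).mpr (hc.mul_left b))).2

namespace ThetaTransforms

variable {a b c : ℤ} {d e : ℕ}

lemma thetaMultiplier_of_shift_right (k : ℤ) (hc : Even c) (hd : Odd d) (he : Odd e)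
    (h : (d : ℤ) = e + 2 * k * c)
    (H : ThetaTransforms 1 (thetaMultiplier c e) a (b - 2 * k * a) c e) :
    ThetaTransforms 1 (thetaMultiplier c d) a b c d := by
  rw [thetaMultiplier_congr_right hc hd he ⟨k, by rw [h]; ring⟩]
  simpa [h] using H.right_mul_T_sq_zpow k

lemma thetaMultiplier_of_neg_shift_right (s : ℤˣ) (hc : Even c) (hsc : 0 < s * c) (hd : Odd d)
    (h : (d : ℤ) + e = 2 * (s * c))
    (H : ThetaTransforms 1 (thetaMultiplier (-c) e) (-a) (-(b - 2 * s * a)) (-c) e) :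
    ThetaTransforms 1 (thetaMultiplier c d) a b c d := by
  have he : (e : ℤ) = -(d - 2 * s * c) := by linarith
  rw [he] at H
  rw [thetaMultiplier_eq_neg s hc hd h]
  simpa using (neg_of_sign s hsc H).right_mul_T_sq_zpow s

lemma thetaMultiplier_of_shift_left (k : ℤ) (hd : 0 < (d : ℤ))
    (H : ThetaTransforms 1 (thetaMultiplier (c - 2 * k * d) d) (a - 2 * k * b) b
      (c - 2 * k * d) d) :
    ThetaTransforms 1 (thetaMultiplier c d) a b c d := by
  have hmod : c ≡ c - 2 * k * d [ZMOD d] :=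
    Int.modEq_iff_dvd.mpr ⟨-(2 * k), by ring⟩
  rw [thetaMultiplier_congr_left hmod]
  simpa using H.right_mul_U_sq_zpow k hd

end ThetaTransforms

lemma thetaTransforms_thetaMultiplier_zero {a b : ℤ} {d : ℕ} (hdet : a * d = 1) (hb : Even b) :
    ThetaTransforms 1 (thetaMultiplier 0 d) a b 0 d := by
  obtain ⟨ha, hd⟩ : a = 1 ∧ (d : ℤ) = 1 := by
    rcases Int.mul_eq_one_iff_eq_one_or_neg_one.mp hdet with h | h <;> omega
  obtain rfl : d = 1 := by exact_mod_cast hd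
  obtain ⟨k, rfl⟩ := hb.two_dvd
  intro z σ _
  simpa [ha, thetaMultiplier, thetaEpsilon] using jacobiTheta₂_add_two_mul_int_right z σ k

lemma exists_unit_mul_eq_natAbs (c : ℤ) : ∃ s : ℤˣ, (s : ℤ) * c = c.natAbs := by
  rcases c.natAbs_eq with h | h
  · exact ⟨1, by simpa using h⟩
  · exact ⟨-1, by simpa [neg_eq_iff_eq_neg] using h⟩

lemma natAbs_sub_unit_mul_lt {s : ℤˣ} {c : ℤ} {d : ℕ} (hs : s * c = c.natAbs) (hd : 0 < d)
    (hdc : d < c.natAbs) : (c - 2 * s * d).natAbs < c.natAbs := by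
  rcases Int.units_eq_one_or s with rfl | rfl <;>
    simp only [Units.val_one, Units.val_neg] at hs ⊢ <;> omega

theorem thetaTransforms_thetaMultiplier (a b c : ℤ) (d : ℕ) (hdet : a * d - b * c = 1)
    (hb : Even b) (hc : Even c) :
    ThetaTransforms 1 (thetaMultiplier c d) a b c d := by
  have hd : Odd d := by exact_mod_cast odd_of_det_eq_one hdet hc
  have hd0 : 0 < (d : ℤ) := by exact_mod_cast hd.pos
  rcases eq_or_ne c 0 with rfl | hc0
  · exact thetaTransforms_thetaMultiplier_zero (by simpa using hdet) hb
  obtain ⟨s, hs⟩ := exists_unit_mul_eq_natAbs c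
  have hsc : 0 < s * c := hs ▸ Int.natCast_pos.mpr (Int.natAbs_pos.mpr hc0)
  have hc_ne : c.natAbs ≠ d := fun h ↦
    Nat.not_even_iff_odd.mpr hd (h ▸ Int.natAbs_even.mpr hc)
  rcases lt_or_gt_of_ne hc_ne with hlt | hgt
  · rcases lt_or_ge (2 * c.natAbs) d with hlt2 | hge2
    · obtain ⟨e, he⟩ := Nat.exists_eq_add_of_le hlt2.le
      have hde : (d : ℤ) = e + 2 * s * c := by rw [mul_assoc, hs]; omega
      refine .thetaMultiplier_of_shift_right s hc hd (by grind) hde ?_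
      refine thetaTransforms_thetaMultiplier _ _ _ e ?_ (by grind) hc
      linear_combination hdet - a * hde
    · obtain ⟨e, he⟩ := Nat.exists_eq_add_of_le hge2
      have hde : (d : ℤ) + e = 2 * (s * c) := by rw [hs]; exact_mod_cast he.symm
      refine .thetaMultiplier_of_neg_shift_right s hc hsc hd hde ?_
      refine thetaTransforms_thetaMultiplier _ _ _ e ?_ (by grind) hc.neg
      linear_combination hdet - a * hde
  · have hdec := natAbs_sub_unit_mul_lt hs hd.pos hgt
    refine .thetaMultiplier_of_shift_left s hd0 ?_
    refine thetaTransforms_thetaMultiplier _ _ _ d ?_ hb (by grind)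
    linear_combination hdet
termination_by c.natAbs + d
decreasing_by all_goals omega

/-- The two-variable theta series `∑_{m ≡ h (mod N)} exp (2πi (D τ m² / N + m z))`, written in terms
of `jacobiTheta₂` by means of the substitution `m = h + N n`. Its `z`-derivative at `0` is
`2πi · shimuraTheta N D h τ`. -/
noncomputable def shimuraJacobiTheta (N D : ℕ) (h : ℤ) (τ z : ℂ) : ℂ :=
  cexp (2 * Real.pi * I * (D * τ * h ^ 2 / N + h * z)) *
    jacobiTheta₂ (2 * D * h * τ + N * z) (2 * D * N * τ)

section ShimuraTheta

variable {N D : ℕ} {τ : ℂ}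

lemma shimuraTheta_congr {h h' : ℤ} (hh : h ≡ h' [ZMOD N]) :
    shimuraTheta N D h τ = shimuraTheta N D h' τ := by
  have hiff (m : ℤ) : (N : ℤ) ∣ m - h ↔ (N : ℤ) ∣ m - h' := by
    rw [← Int.modEq_iff_dvd, ← Int.modEq_iff_dvd]
    exact ⟨hh.symm.trans, hh.trans⟩
  simp only [shimuraTheta, hiff]

lemma shimuraTheta_eq_tsum (hN : N ≠ 0) (h : ℤ) :
    shimuraTheta N D h τ = ∑' n : ℤ, ((h + N * n : ℤ) : ℂ) *
      cexp (2 * Real.pi * I * D * τ * ((h + N * n : ℤ) : ℂ) ^ 2 / N) := by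
  have hinj : Function.Injective (fun n : ℤ ↦ h + N * n) := fun m n hmn ↦ by
    simpa [hN] using hmn
  rw [shimuraTheta, ← hinj.tsum_eq]
  · simp
  · intro m hm
    obtain ⟨n, hn⟩ : (N : ℤ) ∣ m - h := by
      by_contra hndvd
      simp [hndvd] at hm
    exact ⟨n, by simp only; linarith⟩

lemma im_two_mul_mul_pos (hN : 0 < N) (hD : 0 < D) (hτ : 0 < τ.im) :
    0 < (2 * D * N * τ : ℂ).im := by
  have hcast : (2 * D * N * τ : ℂ) = ((2 * D * N : ℝ) : ℂ) * τ := by push_cast; rfl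
  rw [hcast, im_ofReal_mul]
  positivity

lemma two_pi_I_mul_shimuraTheta (hN : 0 < N) (hD : 0 < D) (h : ℤ) (hτ : 0 < τ.im) :
    2 * Real.pi * I * shimuraTheta N D h τ =
      cexp (2 * Real.pi * I * (D * τ * h ^ 2 / N)) *
        (2 * Real.pi * I * h * jacobiTheta₂ (2 * D * h * τ) (2 * D * N * τ) +
          N * jacobiTheta₂' (2 * D * h * τ) (2 * D * N * τ)) := by
  have hN0 : (N : ℂ) ≠ 0 := by exact_mod_cast hN.ne'
  have him := im_two_mul_mul_pos hN hD hτ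
  have hsum := (hasSum_jacobiTheta₂_term (2 * D * h * τ) him).mul_left (2 * Real.pi * I * h)
  have hsum' := (hasSum_jacobiTheta₂'_term (2 * D * h * τ) him).mul_left (N : ℂ)
  rw [shimuraTheta_eq_tsum hN.ne', ← tsum_mul_left, ← ((hsum.add hsum').mul_left _).tsum_eq]
  refine tsum_congr fun n ↦ ?_
  have hexp : cexp (2 * Real.pi * I * D * τ * ((h + N * n : ℤ) : ℂ) ^ 2 / N) =
      cexp (2 * Real.pi * I * (D * τ * h ^ 2 / N)) *
        cexp (2 * Real.pi * I * n * (2 * D * h * τ) + Real.pi * I * n ^ 2 * (2 * D * N * τ)) := by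
    rw [← exp_add]
    congr 1
    push_cast
    field_simp
    ring
  rw [jacobiTheta₂'_term, jacobiTheta₂_term, hexp]
  push_cast
  ring

lemma hasDerivAt_shimuraJacobiTheta_zero (hN : 0 < N) (hD : 0 < D) (h : ℤ) (hτ : 0 < τ.im) :
    HasDerivAt (shimuraJacobiTheta N D h τ) (2 * Real.pi * I * shimuraTheta N D h τ) 0 := by
  have harg : HasDerivAt (fun z : ℂ ↦ 2 * D * h * τ + N * z) (N * 1) 0 :=
    ((hasDerivAt_id (0 : ℂ)).const_mul (N : ℂ)).const_add _
  have hexponent : HasDerivAt (fun z : ℂ ↦ 2 * Real.pi * I * (D * τ * h ^ 2 / N + h * z))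
      (2 * Real.pi * I * (h * 1)) 0 :=
    (((hasDerivAt_id (0 : ℂ)).const_mul (h : ℂ)).const_add _).const_mul _
  have htheta := (hasDerivAt_jacobiTheta₂_fst (2 * D * h * τ + N * 0)
    (im_two_mul_mul_pos hN hD hτ)).comp (0 : ℂ) harg
  refine (hexponent.cexp.mul htheta).congr_deriv ?_
  rw [two_pi_I_mul_shimuraTheta hN hD h hτ]
  simp only [mul_zero, add_zero, mul_one, Function.comp_apply]
  ring

variable {a b c k : ℤ} {d : ℕ}

lemma exp_shimuraJacobiTheta_moebius (hN : N ≠ 0) (h : ℤ) (hdet : a * d - b * c = 1)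
    (hc : c = 4 * N * D * k) (hj : (c * τ + d : ℂ) ≠ 0) (z : ℂ) :
    cexp (2 * Real.pi * I *
        (D * ((a * τ + b) / (c * τ + d)) * h ^ 2 / N + h * (z / (c * τ + d)))) *
      cexp (Real.pi * I * (2 * k : ℤ) * (2 * D * h * (a * τ + b) + N * z) ^ 2 / (c * τ + d)) =
    cexp (2 * Real.pi * I * (D * a * b * h ^ 2 / N)) *
      cexp (2 * Real.pi * I * k * N ^ 2 / (c * τ + d) * z ^ 2) *
      cexp (2 * Real.pi * I * (D * τ * (a * h : ℤ) ^ 2 / N + (a * h : ℤ) * z)) := by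
  have hN0 : (N : ℂ) ≠ 0 := by exact_mod_cast hN
  have hcC : (c : ℂ) = 4 * N * D * k := by exact_mod_cast hc
  have hdetC : (a : ℂ) * d - b * c = 1 := by exact_mod_cast hdet
  have hcancel : 1 + (c : ℂ) * (a * τ + b) = a * (c * τ + d) := by linear_combination -hdetC
  generalize (c * τ + d : ℂ) = j at *
  simp only [← exp_add]
  congr 1
  push_cast
  field_simp
  linear_combination (D * h ^ 2 * (a * τ + b) + h * z * N) * hcancel -
    (D * h ^ 2 * (a * τ + b) ^ 2 + h * z * N * (a * τ + b)) * hcC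

lemma shimuraJacobiTheta_moebius (hN : 0 < N) (hD : 0 < D) (h : ℤ)
    (hdet : a * d - b * c = 1) (hc : c = 4 * N * D * k) (hτ : 0 < τ.im) (z : ℂ) :
    shimuraJacobiTheta N D h ((a * τ + b) / (c * τ + d)) (z / (c * τ + d)) =
      cexp (2 * Real.pi * I * (D * a * b * h ^ 2 / N)) * thetaMultiplier (2 * k) d *
        (c * τ + d) ^ (1 / 2 : ℂ) * cexp (2 * Real.pi * I * k * N ^ 2 / (c * τ + d) * z ^ 2) *
        shimuraJacobiTheta N D (a * h) τ z := by
  have hj : (c * τ + d : ℂ) ≠ 0 :=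
    mod_cast moebius_denom_ne_zero (hdet ▸ one_ne_zero) hτ
  have hlaw := thetaTransforms_thetaMultiplier a (2 * D * N * b) (2 * k) d
    (by rw [← hdet, hc]; ring) (by grind) (even_two_mul k)
    (2 * D * h * (a * τ + b) + N * z) (2 * D * N * τ) (im_two_mul_mul_pos hN hD hτ)
  have hden : (2 * k : ℤ) * (2 * D * N * τ) + (d : ℤ) = (c * τ + d : ℂ) := by
    rw [hc]; push_cast; ring
  have harg : (2 * D * h * (a * τ + b) + N * z : ℂ) =
      2 * D * (a * h : ℤ) * τ + N * z + (2 * D * h * b : ℤ) := by push_cast; ring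
  have hshift : jacobiTheta₂ (2 * D * h * (a * τ + b) + N * z) (2 * D * N * τ) =
      jacobiTheta₂ (2 * D * (a * h : ℤ) * τ + N * z) (2 * D * N * τ) := by
    rw [harg, jacobiTheta₂_add_int_left]
  have hz : (2 * D * h * ((a * τ + b) / (c * τ + d)) + N * (z / (c * τ + d)) : ℂ) =
      (2 * D * h * (a * τ + b) + N * z) / (c * τ + d) := by ring
  have hσ : (2 * D * N * ((a * τ + b) / (c * τ + d)) : ℂ) =
      (a * (2 * D * N * τ) + (2 * D * N * b : ℤ)) / (c * τ + d) := by push_cast; ring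
  rw [hden, hshift, one_mul] at hlaw
  rw [shimuraJacobiTheta, shimuraJacobiTheta, hz, hσ, hlaw]
  linear_combination (thetaMultiplier (2 * k) d * (c * τ + d) ^ (1 / 2 : ℂ) *
    jacobiTheta₂ (2 * D * (a * h : ℤ) * τ + N * z) (2 * D * N * τ)) *
    exp_shimuraJacobiTheta_moebius hN.ne' h hdet hc hj z

lemma shimuraTheta_moebius (hN : 0 < N) (hD : 0 < D) (h : ℤ)
    (hdet : a * d - b * c = 1) (hc : c = 4 * N * D * k) (hτ : 0 < τ.im) :
    shimuraTheta N D h ((a * τ + b) / (c * τ + d)) =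
      cexp (2 * Real.pi * I * (D * a * b * h ^ 2 / N)) * thetaMultiplier (2 * k) d *
        ((c * τ + d) ^ (1 / 2 : ℂ) * (c * τ + d)) * shimuraTheta N D (a * h) τ := by
  have hdet_pos : 0 < a * d - b * c := hdet ▸ one_pos
  have hj : (c * τ + d : ℂ) ≠ 0 := mod_cast moebius_denom_ne_zero hdet_pos.ne' hτ
  have him : 0 < ((a * τ + b) / (c * τ + d) : ℂ).im :=
    mod_cast im_moebius_pos hdet_pos hτ
  have hlaw := funext (shimuraJacobiTheta_moebius hN hD h hdet hc hτ)
  have hleft := hasDerivAt_shimuraJacobiTheta_zero hN hD h him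
  have hright := hasDerivAt_shimuraJacobiTheta_zero hN hD (a * h) hτ
  generalize (c * τ + d : ℂ) = j at *
  have hscale : HasDerivAt (fun z : ℂ ↦ z / j) (1 / j) 0 := (hasDerivAt_id 0).div_const j
  have hgauss : HasDerivAt (fun z : ℂ ↦ cexp (2 * Real.pi * I * k * N ^ 2 / j * z ^ 2)) 0 0 := by
    simpa using ((hasDerivAt_pow 2 (0 : ℂ)).const_mul (2 * Real.pi * I * k * N ^ 2 / j)).cexp
  have hleft' := (zero_div j ▸ hleft).comp (0 : ℂ) hscale
  have hright' := (hgauss.const_mul (cexp (2 * Real.pi * I * (D * a * b * h ^ 2 / N)) *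
    thetaMultiplier (2 * k) d * j ^ (1 / 2 : ℂ))).mul hright
  have hderiv := hleft'.unique (hright'.congr_of_eventuallyEq (.of_eq hlaw))
  rw [mul_zero, zero_mul, zero_add, zero_pow two_ne_zero, mul_zero, Complex.exp_zero, mul_one,
    mul_one_div, div_eq_iff hj] at hderiv
  apply mul_left_cancel₀ two_pi_I_ne_zero
  rw [hderiv]
  ring

theorem shimuraTheta_slash (hN : 0 < N) (hD : 0 < D) (h : ℤ) (hdet : a * d - b * c = 1)
    (hc : (4 * N * D : ℤ) ∣ c) (hτ : 0 < τ.im) :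
    (jacobiSym c d : ℂ) ^ 3 * thetaEpsilon d ^ 3 * (c * τ + d) ^ (-(3 : ℂ) / 2) *
        shimuraTheta N D h ((a * τ + b) / (c * τ + d)) =
      cexp (2 * Real.pi * I * (D * a * b * h ^ 2 / N)) * jacobiSym (-(N * D)) d *
        shimuraTheta N D (a * h) τ := by
  obtain ⟨k, hk⟩ := hc
  have hd : Odd d := by exact_mod_cast odd_of_det_eq_one hdet (by grind)
  have hj : (c * τ + d : ℂ) ≠ 0 :=
    mod_cast moebius_denom_ne_zero (hdet ▸ one_ne_zero) hτ
  have hc_eq : c = N * D * (4 * k) := by rw [hk]; ring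
  have hcop : IsCoprime (N * D * (4 * k)) (d : ℤ) := hc_eq ▸ ⟨-b, a, by linarith⟩
  have hmult := hc_eq ▸ jacobiSym_pow_three_mul_thetaMultiplier hd hcop
  rw [shimuraTheta_moebius hN hD h hdet hk hτ, ← hmult]
  linear_combination (jacobiSym c d ^ 3 * thetaEpsilon d ^ 3 * thetaMultiplier (2 * k) d *
    cexp (2 * Real.pi * I * (D * a * b * h ^ 2 / N)) * shimuraTheta N D (a * h) τ) *
    cpow_neg_three_half_mul hj

end ShimuraTheta

theorem shimura_theta_slash_invariant_general (N D : ℕ) (hN : 0 < N) (hD : 0 < D) (h : ℤ)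
    (γ : Matrix.SpecialLinearGroup (Fin 2) ℤ)
    (hd : 0 < γ.1 1 1)
    (hdd : (4 * N * D : ℤ) ∣ (γ.1 1 1 - 1))
    (hb : (N : ℤ) ∣ γ.1 0 1) (hc : (4 * N * D : ℤ) ∣ γ.1 1 0)
    (τ : ℂ) (hτ : 0 < τ.im) :
    ((jacobiSym (γ.1 1 0) (γ.1 1 1).toNat : ℤ) : ℂ) ^ 3 *
        (if (γ.1 1 1) % 4 = 1 then (1 : ℂ) else Complex.I) ^ 3 *
        ((γ.1 1 0 : ℂ) * τ + (γ.1 1 1 : ℂ)) ^ (-(3 : ℂ) / 2) *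
        shimuraTheta N D h
          (((γ.1 0 0 : ℂ) * τ + (γ.1 0 1 : ℂ)) / ((γ.1 1 0 : ℂ) * τ + (γ.1 1 1 : ℂ))) =
      shimuraTheta N D h τ := by
  have hdet := γ.det_coe
  rw [Matrix.det_fin_two] at hdet
  generalize γ.1 0 0 = a, γ.1 0 1 = b, γ.1 1 0 = c, γ.1 1 1 = d at *
  lift d to ℕ using hd.le
  have hε : (if (d : ℤ) % 4 = 1 then (1 : ℂ) else I) = thetaEpsilon d := by
    rw [thetaEpsilon]
    norm_cast
  have hjac : jacobiSym (-(N * D)) d = 1 :=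
    jacobiSym_eq_one_of_four_mul_dvd_sub_one (by rwa [mul_neg, neg_dvd, ← mul_assoc])
  have hexp : cexp (2 * Real.pi * I * (D * a * b * h ^ 2 / N)) = 1 := by
    obtain ⟨b', rfl⟩ := hb
    have hN0 : (N : ℂ) ≠ 0 := by exact_mod_cast hN.ne'
    rw [exp_eq_one_iff]
    refine ⟨D * a * b' * h ^ 2, ?_⟩
    push_cast
    field_simp
  have hah : a * h ≡ h [ZMOD N] := by
    have hN_dvd : (N : ℤ) ∣ 4 * N * D := ⟨4 * D, by ring⟩
    have h1a := dvd_sub ((hN_dvd.trans hdd).mul_left a) ((hN_dvd.trans hc).mul_left b)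
    refine Int.modEq_iff_dvd.mpr ((h1a.mul_left h).trans ⟨1, ?_⟩)
    linear_combination -h * hdet
  have hslash := shimuraTheta_slash hN hD h hdet hc hτ
  rw [hexp, hjac, shimuraTheta_congr hah] at hslash
  simpa [hε] using hslash

theorem shimura_theta_slash_invariant (N D : ℕ) (hN : 0 < N) (hD : 0 < D) (h : ℤ)
    (γ : Matrix.SpecialLinearGroup (Fin 2) ℤ)
    (hd : 0 < γ.1 1 1)
    (ha : (8 * N * D : ℤ) ∣ (γ.1 0 0 - 1)) (hdd : (8 * N * D : ℤ) ∣ (γ.1 1 1 - 1))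
    (hb : (8 * N * D : ℤ) ∣ γ.1 0 1) (hc : (8 * N * D : ℤ) ∣ γ.1 1 0)
    (τ : ℂ) (hτ : 0 < τ.im) :
    ((jacobiSym (γ.1 1 0) (γ.1 1 1).toNat : ℤ) : ℂ) ^ 3 *
        (if (γ.1 1 1) % 4 = 1 then (1 : ℂ) else Complex.I) ^ 3 *
        ((γ.1 1 0 : ℂ) * τ + (γ.1 1 1 : ℂ)) ^ (-(3 : ℂ) / 2) *
        shimuraTheta N D h
          (((γ.1 0 0 : ℂ) * τ + (γ.1 0 1 : ℂ)) / ((γ.1 1 0 : ℂ) * τ + (γ.1 1 1 : ℂ))) =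
      shimuraTheta N D h τ := by
  have h48 : (4 * N * D : ℤ) ∣ 8 * N * D := ⟨2, by ring⟩
  exact shimura_theta_slash_invariant_general N D hN hD h γ hd (h48.trans hdd)
    (.trans ⟨8 * D, by ring⟩ hb) (h48.trans hc) τ hτ
end

section
/- For every m ∈ ℤ, lim_{δ→0⁺} (1/(2π)) ∫_{A_δ} e^{imθ}/(e^{iθ} − e^{−iθ}) dθ = (1/2)·sgn_o(m), where A_δ := [δ, π−δ] ∪ [π+δ, 2π−δ]. Equivalently, the Cauchy principal value (1/(2πi)) PV ∫_{|w|=1} w^m/(w − w^{−1}) · dw/w, taken by excluding symmetric small arcs around w = 1 and w = −1, equals (1/2)·sgn_o(m). -/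
open MeasureTheory Filter Topology Complex

/-- `sgn_o(m) = sgn(m)` for odd `m` and `0` for even `m`. -/
def sgnOdd (m : ℤ) : ℤ := if Odd m then m.sign else 0

/-- The domain `A_δ = [δ, π−δ] ∪ [π+δ, 2π−δ]` excluding small arcs around `θ = 0, π`. -/
def Aset (δ : ℝ) : Set ℝ :=
  Set.Icc δ (Real.pi - δ) ∪ Set.Icc (Real.pi + δ) (2 * Real.pi - δ)

/-!
The reflection `θ ↦ 2π - θ` preserves `A_δ` and turns the integrand of index `m` into minus the
integrand of index `-m`. So the integral over `A_δ` is odd in `m`, and for `m = n ≥ 0` twice it is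
the integral of `(e^{inθ} - e^{-inθ}) / (e^{iθ} - e^{-iθ}) = ∑_{j < n} e^{i(2j + 1 - n)θ}`.
The singularities have cancelled, hence the limit is an integral over the whole period, where only
the constant term `2j + 1 = n`, present exactly when `n` is odd, contributes.
-/

section Aset

theorem isCompact_aset (δ : ℝ) : IsCompact (Aset δ) :=
  isCompact_Icc.union isCompact_Icc

theorem measurableSet_aset (δ : ℝ) : MeasurableSet (Aset δ) :=
  measurableSet_Icc.union measurableSet_Icc

theorem two_pi_sub_mem_aset_iff {δ θ : ℝ} : 2 * Real.pi - θ ∈ Aset δ ↔ θ ∈ Aset δ := by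
  simp only [Aset, Set.mem_union, Set.mem_Icc]
  grind

theorem aset_subset_Ioc {δ : ℝ} (hδ : 0 < δ) : Aset δ ⊆ Set.Ioc 0 (2 * Real.pi) := by
  rintro θ (⟨hl, hu⟩ | ⟨hl, hu⟩) <;> constructor <;> linarith [Real.pi_pos]

theorem sin_ne_zero_of_mem_aset {δ θ : ℝ} (hδ : 0 < δ) (hθ : θ ∈ Aset δ) : Real.sin θ ≠ 0 := by
  rcases hθ with ⟨hl, hu⟩ | ⟨hl, hu⟩
  · exact (Real.sin_pos_of_pos_of_lt_pi (by linarith) (by linarith)).ne'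
  · have hpos : 0 < Real.sin (θ - Real.pi) :=
      Real.sin_pos_of_pos_of_lt_pi (by linarith) (by linarith)
    rw [Real.sin_sub_pi] at hpos
    exact (neg_pos.1 hpos).ne

theorem eventually_mem_aset {θ : ℝ} (hθ : θ ∈ Set.Ioo 0 (2 * Real.pi)) (hπ : θ ≠ Real.pi) :
    ∀ᶠ δ in 𝓝 0, θ ∈ Aset δ := by
  rcases hπ.lt_or_gt with hlt | hgt
  · filter_upwards [eventually_le_nhds hθ.1, eventually_le_nhds (sub_pos.2 hlt)] with δ hl hu
    exact Or.inl ⟨hl, by linarith⟩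
  · filter_upwards [eventually_le_nhds (sub_pos.2 hgt),
      eventually_le_nhds (sub_pos.2 hθ.2)] with δ hl hu
    exact Or.inr ⟨by linarith, by linarith⟩

theorem aecover_aset : AECover (volume.restrict (Set.Ioc 0 (2 * Real.pi))) (𝓝[>] 0) Aset where
  ae_eventually_mem := by
    filter_upwards [ae_restrict_mem measurableSet_Ioc,
      Measure.ae_ne (volume.restrict (Set.Ioc 0 (2 * Real.pi))) Real.pi,
      Measure.ae_ne (volume.restrict (Set.Ioc 0 (2 * Real.pi))) (2 * Real.pi)] with θ hθ hπ h2π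
    exact (eventually_mem_aset ⟨hθ.1, hθ.2.lt_of_ne h2π⟩ hπ).filter_mono nhdsWithin_le_nhds
  measurableSet := measurableSet_aset

variable {E : Type*} [NormedAddCommGroup E] [NormedSpace ℝ E]

theorem tendsto_setIntegral_aset {f : ℝ → E}
    (hf : IntervalIntegrable f volume 0 (2 * Real.pi)) :
    Tendsto (fun δ => ∫ θ in Aset δ, f θ) (𝓝[>] 0) (𝓝 (∫ θ in 0..2 * Real.pi, f θ)) := by
  rw [intervalIntegral.integral_of_le Real.two_pi_pos.le]
  refine (aecover_aset.integral_tendsto_of_countably_generated hf.1).congr' ?_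
  filter_upwards [self_mem_nhdsWithin] with δ hδ
  rw [Measure.restrict_restrict_of_subset (aset_subset_Ioc hδ)]

theorem setIntegral_aset_comp_two_pi_sub (f : ℝ → E) (δ : ℝ) :
    ∫ θ in Aset δ, f (2 * Real.pi - θ) = ∫ θ in Aset δ, f θ := by
  have hpre : (fun θ => 2 * Real.pi - θ) ⁻¹' Aset δ = Aset δ :=
    Set.ext fun _ => two_pi_sub_mem_aset_iff
  have h := (Measure.measurePreserving_sub_left volume (2 * Real.pi)).setIntegral_preimage_emb
    (measurableEmbedding_subLeft _) f (Aset δ)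
  rwa [hpre] at h

end Aset

theorem integral_exp_I_mul_int_mul (k : ℤ) :
    ∫ θ in (0 : ℝ)..2 * Real.pi, exp (I * k * θ) = if k = 0 then 2 * (Real.pi : ℂ) else 0 := by
  split_ifs with hk
  · simp [hk]
  · have hperiod : exp (I * k * (2 * Real.pi : ℝ)) = 1 :=
      exp_eq_one_iff.2 ⟨k, by push_cast; ring⟩
    have hc : I * (k : ℂ) ≠ 0 := mul_ne_zero I_ne_zero (Int.cast_ne_zero.2 hk)
    rw [integral_exp_mul_complex hc, hperiod, ofReal_zero, mul_zero, exp_zero, sub_self, zero_div]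

/-- The exponential sum `∑_{j < n} e^{i(2j + 1 - n)θ}`, which equals `sin (nθ) / sin θ` wherever
`sin θ ≠ 0` and is regular everywhere: the Chebyshev polynomial `U_{n-1}` at `cos θ`. -/
noncomputable def sinRatioSum (n : ℕ) (θ : ℝ) : ℂ :=
  ∑ j ∈ Finset.range n, exp (I * (2 * j + 1 - n : ℤ) * θ)

theorem continuous_sinRatioSum (n : ℕ) : Continuous (sinRatioSum n) := by
  unfold sinRatioSum
  fun_prop

theorem sum_range_ite_two_mul_add_one_sub_eq_zero {M : Type*} [AddCommMonoid M] (n : ℕ) (c : M) :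
    ∑ j ∈ Finset.range n, (if (2 * j + 1 - n : ℤ) = 0 then c else 0) = if Odd n then c else 0 := by
  split_ifs with hn
  · obtain ⟨k, rfl⟩ := hn
    have hiff (j : ℕ) : (2 * j + 1 - (2 * k + 1 : ℕ) : ℤ) = 0 ↔ j = k := by omega
    simp only [hiff]
    rw [Finset.sum_ite_eq', if_pos (Finset.mem_range.2 (by omega))]
  · exact Finset.sum_eq_zero fun j _ => if_neg fun hj => hn ⟨j, by omega⟩

theorem integral_sinRatioSum (n : ℕ) :
    ∫ θ in (0 : ℝ)..2 * Real.pi, sinRatioSum n θ = if Odd n then 2 * (Real.pi : ℂ) else 0 := by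
  unfold sinRatioSum
  rw [intervalIntegral.integral_finsetSum fun j _ =>
    Continuous.intervalIntegrable (by fun_prop) _ _]
  simp only [integral_exp_I_mul_int_mul]
  exact sum_range_ite_two_mul_add_one_sub_eq_zero n _

/-- The singular integrand `e^{imθ} / (e^{iθ} - e^{-iθ})`; it is `0` by convention at the poles
`θ ∈ πℤ`. -/
noncomputable def pvIntegrand (m : ℤ) (θ : ℝ) : ℂ :=
  exp (I * m * θ) / (exp (I * θ) - exp (-I * θ))

theorem exp_I_mul_sub_exp_neg_I_mul (z : ℂ) : exp (I * z) - exp (-I * z) = 2 * I * sin z := by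
  rw [mul_right_comm, two_sin, mul_assoc, I_mul_I]
  ring_nf

theorem exp_I_mul_sub_exp_neg_I_mul_ne_zero {θ : ℝ} (hθ : Real.sin θ ≠ 0) :
    exp (I * θ) - exp (-I * θ) ≠ 0 := by
  rw [exp_I_mul_sub_exp_neg_I_mul, ← ofReal_sin]
  exact mul_ne_zero (mul_ne_zero two_ne_zero I_ne_zero) (ofReal_ne_zero.2 hθ)

theorem integrableOn_pvIntegrand (m : ℤ) {δ : ℝ} (hδ : 0 < δ) :
    IntegrableOn (pvIntegrand m) (Aset δ) :=
  ContinuousOn.integrableOn_compact (isCompact_aset δ) <|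
    ContinuousOn.div (by fun_prop) (by fun_prop) fun _ hθ =>
      exp_I_mul_sub_exp_neg_I_mul_ne_zero (sin_ne_zero_of_mem_aset hδ hθ)

theorem exp_I_mul_int_mul_two_pi_sub (k : ℤ) (z : ℂ) :
    exp (I * k * (2 * Real.pi - z)) = exp (-I * k * z) :=
  exp_eq_exp_iff_exists_int.2 ⟨k, by ring⟩

theorem pvIntegrand_two_pi_sub (m : ℤ) (θ : ℝ) :
    pvIntegrand m (2 * Real.pi - θ) = -pvIntegrand (-m) θ := by
  have hpos := exp_I_mul_int_mul_two_pi_sub 1 θ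
  have hneg := exp_I_mul_int_mul_two_pi_sub (-1) θ
  have hnum := exp_I_mul_int_mul_two_pi_sub m θ
  simp only [Int.cast_neg, Int.cast_one, mul_neg, mul_one, neg_mul, neg_neg] at hpos hneg hnum
  simp only [pvIntegrand, ofReal_sub, ofReal_mul, ofReal_ofNat, Int.cast_neg, mul_neg, neg_mul]
  rw [hpos, hneg, hnum, ← div_neg, neg_sub]

theorem setIntegral_pvIntegrand_neg (m : ℤ) (δ : ℝ) :
    ∫ θ in Aset δ, pvIntegrand (-m) θ = -∫ θ in Aset δ, pvIntegrand m θ := by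
  rw [← setIntegral_aset_comp_two_pi_sub (pvIntegrand m), ← integral_neg]
  simp only [pvIntegrand_two_pi_sub, neg_neg]

theorem pvIntegrand_sub_pvIntegrand_neg (n : ℕ) {θ : ℝ} (hθ : Real.sin θ ≠ 0) :
    pvIntegrand n θ - pvIntegrand (-n) θ = sinRatioSum n θ := by
  have hpow (k : ℕ) : exp (I * k * θ) = exp (I * θ) ^ k := by
    rw [← exp_nat_mul]; ring_nf
  have hpow_neg (k : ℕ) : exp (-I * k * θ) = exp (-I * θ) ^ k := by
    rw [← exp_nat_mul]; ring_nf
  calc pvIntegrand n θ - pvIntegrand (-n) θ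
      = (exp (I * θ) ^ n - exp (-I * θ) ^ n) / (exp (I * θ) - exp (-I * θ)) := by
        rw [← hpow, ← hpow_neg, sub_div]
        simp only [pvIntegrand, Int.cast_neg, Int.cast_natCast, mul_neg, neg_mul]
    _ = ∑ j ∈ Finset.range n, exp (I * θ) ^ j * exp (-I * θ) ^ (n - 1 - j) :=
        (geom₂_sum (sub_ne_zero.1 (exp_I_mul_sub_exp_neg_I_mul_ne_zero hθ)) n).symm
    _ = sinRatioSum n θ := Finset.sum_congr rfl fun j hj => by
        obtain ⟨k, rfl⟩ := Nat.exists_eq_add_of_lt (Finset.mem_range.1 hj)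
        rw [show j + k + 1 - 1 - j = k by omega, ← hpow, ← hpow_neg, ← exp_add]
        push_cast
        ring_nf

theorem two_mul_setIntegral_pvIntegrand (n : ℕ) {δ : ℝ} (hδ : 0 < δ) :
    2 * ∫ θ in Aset δ, pvIntegrand n θ = ∫ θ in Aset δ, sinRatioSum n θ :=
  calc 2 * ∫ θ in Aset δ, pvIntegrand n θ
      = (∫ θ in Aset δ, pvIntegrand n θ) - ∫ θ in Aset δ, pvIntegrand (-n) θ := by
        rw [setIntegral_pvIntegrand_neg, sub_neg_eq_add, two_mul]
    _ = ∫ θ in Aset δ, (pvIntegrand n θ - pvIntegrand (-n) θ) :=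
        (integral_sub (integrableOn_pvIntegrand _ hδ) (integrableOn_pvIntegrand _ hδ)).symm
    _ = ∫ θ in Aset δ, sinRatioSum n θ :=
        setIntegral_congr_fun (measurableSet_aset δ) fun _ hθ =>
          pvIntegrand_sub_pvIntegrand_neg n (sin_ne_zero_of_mem_aset hδ hθ)

theorem sgnOdd_natCast (n : ℕ) : sgnOdd n = if Odd n then 1 else 0 := by
  simp only [sgnOdd, Int.odd_coe_nat]
  split_ifs with hn
  · exact Int.sign_natCast_of_ne_zero hn.pos.ne'
  · rfl

theorem sgnOdd_neg (m : ℤ) : sgnOdd (-m) = -sgnOdd m := by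
  simp only [sgnOdd, odd_neg, Int.sign_neg]
  split_ifs <;> simp

theorem tendsto_setIntegral_pvIntegrand_natCast (n : ℕ) :
    Tendsto (fun δ => ∫ θ in Aset δ, pvIntegrand n θ) (𝓝[>] 0) (𝓝 (Real.pi * sgnOdd n)) := by
  have hlim := (tendsto_setIntegral_aset
    ((continuous_sinRatioSum n).intervalIntegrable _ _)).div_const 2
  have hvalue : (∫ θ in 0..2 * Real.pi, sinRatioSum n θ) / 2 = Real.pi * sgnOdd n := by
    rw [integral_sinRatioSum, sgnOdd_natCast]
    split_ifs <;> simp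
  rw [hvalue] at hlim
  refine hlim.congr' ?_
  filter_upwards [self_mem_nhdsWithin] with δ hδ
  rw [← two_mul_setIntegral_pvIntegrand n hδ, mul_div_cancel_left₀ _ two_ne_zero]

theorem tendsto_setIntegral_pvIntegrand (m : ℤ) :
    Tendsto (fun δ => ∫ θ in Aset δ, pvIntegrand m θ) (𝓝[>] 0) (𝓝 (Real.pi * sgnOdd m)) := by
  obtain ⟨n, rfl | rfl⟩ := m.eq_nat_or_neg
  · exact tendsto_setIntegral_pvIntegrand_natCast n
  · simp only [setIntegral_pvIntegrand_neg, sgnOdd_neg, Int.cast_neg, mul_neg]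
    exact (tendsto_setIntegral_pvIntegrand_natCast n).neg

theorem pv_integral_sgn_odd (m : ℤ) :
    Tendsto (fun δ : ℝ => (1 / (2 * (Real.pi : ℂ))) *
        ∫ θ in Aset δ, Complex.exp (Complex.I * (m : ℂ) * (θ : ℝ)) /
          (Complex.exp (Complex.I * (θ : ℝ)) - Complex.exp (-Complex.I * (θ : ℝ))))
      (𝓝[>] (0 : ℝ)) (𝓝 ((1 / 2 : ℂ) * (sgnOdd m : ℂ))) := by
  have hvalue : 1 / (2 * (Real.pi : ℂ)) * (Real.pi * sgnOdd m) = 1 / 2 * sgnOdd m := by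
    have hpi : (Real.pi : ℂ) ≠ 0 := ofReal_ne_zero.2 Real.pi_ne_zero
    field_simp
  rw [← hvalue]
  exact (tendsto_setIntegral_pvIntegrand m).const_mul _
end
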